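/- arXiv:2605.22194 — 8 statements merged into one kernel-verified Lean document; each statement's English description precedes it below -/
import Mathlib

section
/- Let q be a prime power, h, k ≥ 1, and let v ∈ F_{q^h}^k be a nonzero vector. Then the set I = { i ∈ Z/hZ : v^{(q^i)} ∈ ⟨v⟩_{F_{q^h}} }, where v^{(q^i)} denotes the entrywise q^i-th power of v and ⟨v⟩_{F_{q^h}} is the F_{q^h}-span of v, is an additive subgroup of Z/hZ; in particular, |I| divides h. -/
theorem pow_mod_aux (q h : ℕ) (E : Type) [Field E] [Fintype E]
    (hcard : Fintype.card E = q ^ h) (x : E) (n : ℕ) : x ^ q ^ (n % h) = x ^ q ^ n := by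
  have key : ∀ (m : ℕ) (y : E), y ^ q ^ (h * m) = y := by
    intro m y
    rw [pow_mul, ← hcard]
    exact FiniteField.pow_card_pow m y
  conv_rhs => rw [← Nat.mod_add_div n h, pow_add, pow_mul, key]

/-- Let `q` be a prime power and `v ∈ F_{q^h}^k` a nonzero vector.
The set `I = {i ∈ ℤ/hℤ : v^{(q^i)} ∈ ⟨v⟩}` (where `v^{(q^i)}` is the entrywise
`q^i`-th power of `v`) is an additive subgroup of `ℤ/hℤ`; in particular its
cardinality divides `h`. -/
theorem stmt5 (q h k : ℕ) (hq : IsPrimePow q) (hh : 1 ≤ h) (hk : 1 ≤ k)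
    (E : Type) [Field E] [Fintype E] (hcard : Fintype.card E = q ^ h)
    (v : Fin k → E) (hv : v ≠ 0) :
    (∃ G : AddSubgroup (ZMod h),
      (G : Set (ZMod h)) =
        {i : ZMod h | (fun j => v j ^ q ^ i.val) ∈ Submodule.span E {v}}) ∧
    {i : ZMod h | (fun j => v j ^ q ^ i.val) ∈ Submodule.span E {v}}.ncard ∣ h := by
  haveI : NeZero h := ⟨by omega⟩
  have hadd : ∀ a b : ZMod h, (fun j => v j ^ q ^ a.val) ∈ Submodule.span E {v} →
      (fun j => v j ^ q ^ b.val) ∈ Submodule.span E {v} →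
      (fun j => v j ^ q ^ (a + b).val) ∈ Submodule.span E {v} := by
    intro a b ha hb
    rw [Submodule.mem_span_singleton] at *
    obtain ⟨c, hc⟩ := ha
    obtain ⟨d, hd⟩ := hb
    refine ⟨c ^ q ^ b.val * d, ?_⟩
    funext j
    have hcj := congrFun hc j
    have hdj := congrFun hd j
    simp only [Pi.smul_apply, smul_eq_mul] at hcj hdj ⊢
    rw [ZMod.val_add, pow_mod_aux q h E hcard, pow_add, pow_mul, ← hcj, mul_pow, ← hdj, mul_assoc]
  have hzero : (fun j => v j ^ q ^ (0 : ZMod h).val) ∈ Submodule.span E {v} := by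
    simpa using Submodule.mem_span_singleton_self v
  have hsmul : ∀ (n : ℕ) (a : ZMod h), (fun j => v j ^ q ^ a.val) ∈ Submodule.span E {v} →
      (fun j => v j ^ q ^ (n • a).val) ∈ Submodule.span E {v} := by
    intro n a ha
    induction n with
    | zero => rw [zero_smul]; exact hzero
    | succ n ih => rw [succ_nsmul]; exact hadd _ _ ih ha
  let G : AddSubgroup (ZMod h) :=
    { carrier := {i : ZMod h | (fun j => v j ^ q ^ i.val) ∈ Submodule.span E {v}}
      add_mem' := fun {a b} ha hb => hadd a b ha hb
      zero_mem' := hzero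
      neg_mem' := by
        intro a ha
        have h1 : -a = (h - 1) • a := by
          rw [neg_eq_iff_add_eq_zero, ← succ_nsmul', Nat.sub_add_cancel hh]
          simp
        rw [h1]
        exact hsmul _ a ha }
  refine ⟨⟨G, rfl⟩, ?_⟩
  have hG := AddSubgroup.card_addSubgroup_dvd_card G
  rw [Nat.card_zmod] at hG
  exact hG
end

section
/- Let q be a prime power, k, h ≥ 2, and let V be a kh-dimensional vector space over F_q. Let {Σ₁,...,Σ_{k+1}} be a pseudo-arc of PG(kh-1,q) of size k+1, i.e. k+1 h-dimensional F_q-subspaces of V any k of which span V. Then there exist an F_q-linear isomorphism φ : V → M_{k×h}(F_q) and nonzero vectors x₁,...,x_{k+1} ∈ F_q^k such that φ(Σ_i) = { x_i yᵀ : y ∈ F_q^h } for each i = 1,...,k+1. Moreover, the resulting Segre variety is unique: the subset φ^{-1}({ M ∈ M_{k×h}(F_q) : rank M = 1 }) of V does not depend on the choice of such an isomorphism φ. -/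
/-- The set of `k × h` matrices of the form `x yᵀ` for a fixed column `x` and an
arbitrary row `y`; for `x ≠ 0` this is a member of the `(h-1)`-regulus of the
standard Segre variety. -/
def blockSet {F : Type} [Field F] {k h : ℕ} (x : Fin k → F) :
    Set (Matrix (Fin k) (Fin h) F) :=
  {M | ∃ y : Fin h → F, M = Matrix.vecMulVec x y}

theorem aux_single {F : Type} [Field F] {n : ℕ} {U : Fin n → Type} [∀ i, AddCommGroup (U i)]
    [∀ i, Module F (U i)] {W : Type} [AddCommGroup W] [Module F W]
    (g : ∀ i, U i →ₗ[F] W) (i : Fin n) (a : U i) :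
    LinearMap.lsum F U F g (Pi.single i a) = g i a := by
  rw [LinearMap.lsum_apply, LinearMap.sum_apply, Finset.sum_eq_single i]
  · simp
  · intro b _ hb; simp [Pi.single_eq_of_ne hb]
  · simp

open Matrix in
theorem aux_rank_one {F : Type} [Field F] {k h : ℕ} (M : Matrix (Fin k) (Fin h) F) :
    M.rank = 1 ↔ M ≠ 0 ∧ ∃ x y, M = Matrix.vecMulVec x y := by
  constructor
  · intro hM
    refine ⟨?_, ?_⟩
    · rintro rfl
      simp at hM
    · rw [Matrix.rank_eq_finrank_span_cols, finrank_eq_one_iff'] at hM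
      obtain ⟨v, -, hv⟩ := hM
      choose c hc using hv
      refine ⟨v, fun j => c ⟨M.col j, Submodule.subset_span ⟨j, rfl⟩⟩, ?_⟩
      ext i j
      have := congrArg Subtype.val (hc ⟨M.col j, Submodule.subset_span ⟨j, rfl⟩⟩)
      have := congrFun this i
      simp [Matrix.vecMulVec_apply] at this ⊢
      rw [← this, mul_comm]
  · rintro ⟨h0, x, y, rfl⟩
    have h1 := Matrix.rank_vecMulVec_le x y
    have h2 : (Matrix.vecMulVec x y).rank ≠ 0 := by
      intro h3
      apply h0
      rw [Matrix.rank_eq_finrank_span_cols, Submodule.finrank_eq_zero, Submodule.span_eq_bot] at h3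
      ext i j
      exact congrFun (h3 _ ⟨j, rfl⟩) i
    omega

theorem aux_surj {F : Type} [Field F] {n : ℕ} {U : Fin n → Type} [∀ i, AddCommGroup (U i)]
    [∀ i, Module F (U i)] {W : Type} [AddCommGroup W] [Module F W]
    (g : ∀ i, U i →ₗ[F] W) (i : Fin n) (hs : (⨆ j ≠ i, LinearMap.range (g j)) = ⊤) (w : W) :
    ∃ u : ∀ j, U j, u i = 0 ∧ ∑ j, g j (u j) = w := by
  classical
  have key : (⨆ j ≠ i, LinearMap.range (g j)) ≤
      Submodule.map (LinearMap.lsum F U F g) (LinearMap.ker (LinearMap.proj (R := F) (φ := U) i)) := by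
    refine iSup₂_le fun j hj => ?_
    rintro _ ⟨a, rfl⟩
    refine ⟨Pi.single j a, ?_, ?_⟩
    · simp [Pi.single_eq_of_ne hj.symm]
    · exact aux_single g j a
  rw [hs] at key
  obtain ⟨u, hu, hw⟩ := key (Submodule.mem_top (x := w))
  exact ⟨u, by simpa using hu, by simpa using hw⟩

theorem aux_inj {F : Type} [Field F] {n : ℕ} {U : Fin n → Type} [∀ i, AddCommGroup (U i)]
    [∀ i, Module F (U i)] [∀ i, FiniteDimensional F (U i)]
    {W : Type} [AddCommGroup W] [Module F W] [FiniteDimensional F W]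
    (g : ∀ i, U i →ₗ[F] W) (i : Fin n) (hs : (⨆ j ≠ i, LinearMap.range (g j)) = ⊤)
    (hd : ∑ j, Module.finrank F (U j) = Module.finrank F W + Module.finrank F (U i))
    (u : ∀ j, U j) (hu : u i = 0) (h0 : ∑ j, g j (u j) = 0) : u = 0 := by
  classical
  let L : (∀ j, U j) →ₗ[F] W × U i := (LinearMap.lsum F U F g).prod (LinearMap.proj i)
  have hsurj : Function.Surjective L := by
    rintro ⟨w, a⟩
    obtain ⟨u, hu, hw⟩ := aux_surj g i hs (w - g i a)
    refine ⟨u + Pi.single i a, ?_⟩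
    have h1 : LinearMap.lsum F U F g (Pi.single i a) = g i a := aux_single g i a
    have h2 : LinearMap.lsum F U F g u = w - g i a := by simpa using hw
    refine Prod.ext ?_ ?_
    · change LinearMap.lsum F U F g (u + Pi.single i a) = w
      rw [map_add, h1, h2]; abel
    · simp [L, hu]
  have hinj : Function.Injective L := by
    rw [LinearMap.injective_iff_surjective_of_finrank_eq_finrank]
    · exact hsurj
    · rw [Module.finrank_pi_fintype, Module.finrank_prod, hd]
  apply hinj
  rw [map_zero]
  refine Prod.ext ?_ ?_
  · simpa [L] using h0
  · simpa [L] using hu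

/-- canonical description of the Segre variety -/
def auxSeg {F : Type} [Field F] {n : ℕ} {V : Type} [AddCommGroup V] [Module F V]
    (Sg : Fin n → Submodule F V) : Set V :=
  {v | v ≠ 0 ∧ ∃ f : Fin n → V, (∀ i, f i ∈ Sg i) ∧ ∑ i, f i = 0 ∧ ∃ a : Fin n → F,
    v = ∑ i, a i • f i}

theorem aux_unique {k h : ℕ} (hh : 2 ≤ h) {F : Type} [Field F]
    {V : Type} [AddCommGroup V] [Module F V]
    (Sg : Fin (k + 1) → Submodule F V)
    (hsp : ∀ i : Fin (k + 1), (⨆ j ≠ i, Sg j) = ⊤)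
    (φ : V ≃ₗ[F] Matrix (Fin k) (Fin h) F) (x : Fin (k + 1) → Fin k → F)
    (hφ : ∀ i, ⇑φ '' (Sg i : Set V) = blockSet (x i)) :
    ⇑φ ⁻¹' {M : Matrix (Fin k) (Fin h) F | M.rank = 1} = auxSeg Sg := by
  classical
  have hto : ∀ i, ∀ v ∈ Sg i, ∃ y, φ v = Matrix.vecMulVec (x i) y := by
    intro i v hv
    have : φ v ∈ blockSet (h := h) (x i) := by rw [← hφ]; exact ⟨v, hv, rfl⟩
    exact this
  have hfrom : ∀ i y, φ.symm (Matrix.vecMulVec (x i) y) ∈ Sg i := by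
    intro i y
    have : Matrix.vecMulVec (x i) y ∈ φ '' (Sg i : Set V) := by rw [hφ]; exact ⟨y, rfl⟩
    obtain ⟨v, hv, e⟩ := this
    rw [← e]; simpa using hv
  let g : Fin (k+1) → (F →ₗ[F] (Fin k → F)) := fun j => LinearMap.toSpanSingleton F _ (x j)
  let c : V →ₗ[F] (Fin k → F) :=
    { toFun := fun v i => φ v i ⟨0, by omega⟩
      map_add' := by intros; ext; simp
      map_smul' := by intros; ext; simp }
  have hcs : Function.Surjective c := by
    intro w
    refine ⟨φ.symm (Matrix.of fun i _ => w i), ?_⟩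
    ext i; simp [c]
  have hspan : ∀ i, (⨆ j ≠ i, LinearMap.range (g j)) = ⊤ := by
    intro i
    rw [eq_top_iff, ← LinearMap.range_eq_top.2 hcs, LinearMap.range_eq_map, ← hsp i,
      Submodule.map_iSup]
    refine iSup_mono fun j => ?_
    rw [Submodule.map_iSup]
    refine iSup_mono fun hj => ?_
    rintro _ ⟨v, hv, rfl⟩
    obtain ⟨y, hy⟩ := hto j v hv
    refine ⟨y ⟨0, by omega⟩, ?_⟩
    ext l
    simp [g, c, hy, Matrix.vecMulVec_apply, mul_comm]
  have hrel0 : ∀ (a : Fin (k+1) → F) (i), a i = 0 → ∑ j, a j • x j = 0 → a = 0 := by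
    intro a i ha hs
    refine aux_inj (U := fun _ => F) g i (hspan i) ?_ a ha ?_
    · simp
    · simpa [g] using hs
  obtain ⟨l, hl0, hl⟩ : ∃ l : Fin (k+1) → F, l ≠ 0 ∧ ∑ j, l j • x j = 0 := by
    have := LinearMap.ker_ne_bot_of_finrank_lt (f := LinearMap.lsum F (fun _ => F) F g) (by simp)
    obtain ⟨l, h1, h2⟩ := (Submodule.ne_bot_iff _).1 this
    exact ⟨l, h2, by simpa [g] using h1⟩
  have hlne : ∀ i, l i ≠ 0 := fun i hi => hl0 (hrel0 l i hi hl)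
  have huniq : ∀ a : Fin (k+1) → F, ∑ j, a j • x j = 0 → ∀ j, a j = l j * (a 0 / l 0) := by
    intro a ha j
    have := hrel0 (a - (a 0 / l 0) • l) 0 (by simp [hlne]) (by
      simp only [Pi.sub_apply, Pi.smul_apply, sub_smul, Finset.sum_sub_distrib, ha, smul_assoc,
        ← Finset.smul_sum, hl, smul_zero, sub_zero])
    have := congrFun this j
    simp [sub_eq_zero] at this
    rw [this, mul_comm]
  ext v
  simp only [Set.mem_preimage, Set.mem_ofPred_eq, aux_rank_one, auxSeg]
  refine and_congr (by simp) ⟨?_, ?_⟩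
  · rintro ⟨w, z, hwz⟩
    obtain ⟨b, -, hb⟩ := aux_surj (U := fun _ => F) g 0 (hspan 0) w
    refine ⟨fun i => φ.symm (Matrix.vecMulVec (x i) (l i • z)), fun i => hfrom _ _, ?_,
      fun i => b i / l i, ?_⟩
    · apply φ.injective
      rw [map_sum]
      ext r s
      have := congrFun hl r
      simp only [Finset.sum_apply, Pi.smul_apply, smul_eq_mul, Pi.zero_apply] at this
      simp only [LinearEquiv.apply_symm_apply, Matrix.sum_apply, Matrix.vecMulVec_apply,
        Pi.smul_apply, smul_eq_mul, map_zero, Matrix.zero_apply]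
      rw [← zero_mul (z s), ← this, Finset.sum_mul]
      exact Finset.sum_congr rfl fun i _ => by ring
    · apply φ.injective
      rw [map_sum, hwz, ← hb]
      ext r s
      simp only [map_smul, LinearEquiv.apply_symm_apply, Matrix.sum_apply, Matrix.vecMulVec_apply,
        Pi.smul_apply, smul_eq_mul, Matrix.smul_apply, Finset.sum_apply, g,
        LinearMap.toSpanSingleton_apply, Finset.sum_mul]
      refine Finset.sum_congr rfl fun i _ => ?_
      have := hlne i
      field_simp
  · rintro ⟨f, hf, hs, a, rfl⟩
    choose y hy using fun i => hto i (f i) (hf i)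
    have hyl : ∀ i s, y i s = l i * (y 0 s / l 0) := by
      intro i s
      refine huniq (fun i => y i s) ?_ i
      have := congrArg φ hs
      rw [map_sum, map_zero] at this
      ext r
      have := congrFun (congrFun this r) s
      simpa [Matrix.sum_apply, hy, Matrix.vecMulVec_apply, mul_comm] using this
    refine ⟨∑ i, (a i * l i) • x i, fun s => y 0 s / l 0, ?_⟩
    rw [map_sum]
    ext r s
    simp only [map_smul, hy, Matrix.sum_apply, Matrix.vecMulVec_apply,
        Pi.smul_apply, smul_eq_mul, Matrix.smul_apply, Finset.sum_apply, Finset.sum_mul]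
    refine Finset.sum_congr rfl fun i _ => ?_
    rw [hyl i s]; ring

theorem aux_exists {k h : ℕ} (hk : 2 ≤ k) (hh : 2 ≤ h) {F : Type} [Field F]
    {V : Type} [AddCommGroup V] [Module F V] (hV : Module.finrank F V = k * h)
    (Sg : Fin (k + 1) → Submodule F V)
    (hrk : ∀ i, Module.finrank F (Sg i) = h)
    (hsp : ∀ i : Fin (k + 1), (⨆ j ≠ i, Sg j) = ⊤) :
    ∃ (φ : V ≃ₗ[F] Matrix (Fin k) (Fin h) F) (x : Fin (k + 1) → Fin k → F),
      (∀ i, x i ≠ 0) ∧ ∀ i, ⇑φ '' (Sg i : Set V) = blockSet (x i) := by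
  classical
  have : FiniteDimensional F V := FiniteDimensional.of_finrank_pos (by rw [hV]; positivity)
  let g : ∀ i, Sg i →ₗ[F] V := fun i => (Sg i).subtype
  have hspan : ∀ i, (⨆ j ≠ i, LinearMap.range (g j)) = ⊤ := by
    intro i; simpa [g] using hsp i
  let S := LinearMap.lsum F (fun i => Sg i) F g
  have hS : ∀ u, S u = ∑ j, (u j : V) := by intro u; simp [S, g]
  have hSs : Function.Surjective S := by
    intro v
    obtain ⟨u, -, hu⟩ := aux_surj g 0 (hspan 0) v
    exact ⟨u, by simpa [hS, g] using hu⟩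
  have hK : Module.finrank F (LinearMap.ker S) = h := by
    have := S.finrank_range_add_finrank_ker
    rw [LinearMap.range_eq_top.2 hSs, finrank_top, hV, Module.finrank_pi_fintype] at this
    simp [hrk] at this
    linarith
  let e : (Fin h → F) ≃ₗ[F] LinearMap.ker S := LinearEquiv.ofFinrankEq _ _ (by simp [hK])
  let p : ∀ i, (Fin h → F) →ₗ[F] Sg i := fun i =>
    LinearMap.proj i ∘ₗ (LinearMap.ker S).subtype ∘ₗ e.toLinearMap
  have hpsum : ∀ y, ∑ i, (p i y : V) = 0 := by
    intro y
    have := (e y).2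
    rw [LinearMap.mem_ker, hS] at this
    exact this
  have hpinj : ∀ i, Function.Injective (p i) := by
    intro i
    rw [injective_iff_map_eq_zero]
    intro y hy
    have : (e y : ∀ j, Sg j) = 0 := by
      refine aux_inj g i (hspan i) ?_ _ hy (hpsum y)
      simp [hrk, hV]; ring
    simpa using this
  have hps : ∀ i, Function.Surjective (p i) := by
    intro i
    exact (LinearMap.injective_iff_surjective_of_finrank_eq_finrank (by simp [hrk])).1 (hpinj i)
  let ψ : Matrix (Fin k) (Fin h) F →ₗ[F] V :=
    { toFun := fun M => ∑ i : Fin k, (p i.castSucc (M i) : V)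
      map_add' := by
        intro M N
        rw [← Finset.sum_add_distrib]
        refine Finset.sum_congr rfl fun i _ => ?_
        change ((p i.castSucc (M i + N i) : Sg _) : V) = _
        simp
      map_smul' := by
        intro c M
        rw [Finset.smul_sum]
        refine Finset.sum_congr rfl fun i _ => ?_
        change ((p i.castSucc (c • M i) : Sg _) : V) = _
        simp }
  have hψ : ∀ x y, ψ (Matrix.vecMulVec x y) = ∑ i : Fin k, x i • (p i.castSucc y : V) := by
    intro x y
    change ∑ i : Fin k, (p i.castSucc (Matrix.vecMulVec x y i) : V) = _
    refine Finset.sum_congr rfl fun i _ => ?_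
    have : Matrix.vecMulVec x y i = x i • y := by ext j; simp [Matrix.vecMulVec_apply]
    rw [this]; simp
  let x : Fin (k+1) → Fin k → F := Fin.lastCases (fun _ => -1) (fun i => Pi.single i 1)
  have hψx : ∀ i y, ψ (Matrix.vecMulVec (x i) y) = p i y := by
    intro i y
    rw [hψ]
    refine Fin.lastCases ?_ (fun i => ?_) i
    · have := hpsum y
      rw [Fin.sum_univ_castSucc, add_comm] at this
      simp [x, eq_neg_of_add_eq_zero_left this]
    · simp only [x, Fin.lastCases_castSucc]
      rw [Finset.sum_eq_single i]
      · simp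
      · intro b _ hb; simp [hb]
      · simp
  have hSψ : ∀ i, ∀ v ∈ Sg i, ∃ y, ψ (Matrix.vecMulVec (x i) y) = v := by
    intro i v hv
    obtain ⟨y, hy⟩ := hps i ⟨v, hv⟩
    exact ⟨y, by rw [hψx, hy]⟩
  have hψs : Function.Surjective ψ := by
    rw [← LinearMap.range_eq_top, eq_top_iff, ← hsp 0]
    refine iSup₂_le fun j _ v hv => ?_
    obtain ⟨y, hy⟩ := hSψ j v hv
    exact ⟨_, hy⟩
  have hψi : Function.Injective ψ :=
    (LinearMap.injective_iff_surjective_of_finrank_eq_finrank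
      (by simp [hV, Module.finrank_matrix])).2 hψs
  let Ψ := LinearEquiv.ofBijective ψ ⟨hψi, hψs⟩
  refine ⟨Ψ.symm, x, ?_, ?_⟩
  · intro i
    refine Fin.lastCases ?_ (fun i => ?_) i
    · intro h0
      have := congrFun h0 ⟨0, by omega⟩
      simp [x] at this
    · simp [x]
  · intro i
    ext M
    constructor
    · rintro ⟨v, hv, rfl⟩
      obtain ⟨y, hy⟩ := hSψ i v hv
      refine ⟨y, ?_⟩
      rw [LinearEquiv.symm_apply_eq]
      exact hy.symm
    · rintro ⟨y, rfl⟩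
      refine ⟨p i y, (p i y).2, ?_⟩
      rw [LinearEquiv.symm_apply_eq]
      exact (hψx i y).symm

/-- Let `q` be a prime power and `V` a `k*h`-dimensional vector space
over `F_q`.  Every pseudo-arc `Σ₁, …, Σ_{k+1}` of `PG(kh-1, q)` of size `k+1` (each
`Σᵢ` of dimension `h` and any `k` of them spanning `V`) is, after a suitable linear
identification `φ : V ≃ M_{k×h}(F_q)`, carried to rank-one blocks
`{x_i yᵀ : y ∈ F_q^h}` with `x_i ≠ 0`; moreover the resulting Segre variety
(the preimage of the set of rank-one matrices) does not depend on the choice of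
such an identification. -/
theorem stmt6 (q k h : ℕ) (hq : IsPrimePow q) (hk : 2 ≤ k) (hh : 2 ≤ h)
    (F : Type) [Field F] [Fintype F] (hF : Fintype.card F = q)
    (V : Type) [AddCommGroup V] [Module F V] (hV : Module.finrank F V = k * h)
    (Sg : Fin (k + 1) → Submodule F V) (hinj : Function.Injective Sg)
    (hrk : ∀ i, Module.finrank F (Sg i) = h)
    (hsp : ∀ i : Fin (k + 1), (⨆ j ≠ i, Sg j) = ⊤) :
    (∃ (φ : V ≃ₗ[F] Matrix (Fin k) (Fin h) F) (x : Fin (k + 1) → Fin k → F),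
      (∀ i, x i ≠ 0) ∧ ∀ i, ⇑φ '' (Sg i : Set V) = blockSet (x i)) ∧
    (∀ (φ₁ φ₂ : V ≃ₗ[F] Matrix (Fin k) (Fin h) F)
        (x₁ x₂ : Fin (k + 1) → Fin k → F),
      (∀ i, x₁ i ≠ 0) → (∀ i, ⇑φ₁ '' (Sg i : Set V) = blockSet (x₁ i)) →
      (∀ i, x₂ i ≠ 0) → (∀ i, ⇑φ₂ '' (Sg i : Set V) = blockSet (x₂ i)) →
      ⇑φ₁ ⁻¹' {M : Matrix (Fin k) (Fin h) F | M.rank = 1} =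
        ⇑φ₂ ⁻¹' {M : Matrix (Fin k) (Fin h) F | M.rank = 1}) := by
  refine ⟨aux_exists hk hh hV Sg hrk hsp, ?_⟩
  intro φ₁ φ₂ x₁ x₂ _ h₁ _ h₂
  rw [aux_unique hh Sg hsp φ₁ x₁ h₁, aux_unique hh Sg hsp φ₂ x₂ h₂]
end

section
/- Let q be a prime power, k, h ≥ 2, and V a kh-dimensional F_q-vector space. Let P be a pseudo-arc of PG(V) of size k+1, and let φ : V → M_{k×h}(F_q) be an F_q-linear isomorphism carrying each member of P to a subspace of the form { x yᵀ : y ∈ F_q^h } for some nonzero x ∈ F_q^k (such φ exists, and the family R_{h,q} = { φ^{-1}({ x yᵀ : y ∈ F_q^h }) : x ∈ F_q^k \ {0} } is the (h-1)-regulus of the unique Segre variety of PG(V) containing P). If D is a Desarguesian (h-1)-spread of PG(V) with P ⊆ D, then R_{h,q} ⊆ D. -/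
/-- `D` is a *Desarguesian `(h-1)`-spread* of `PG(V)`: there is an `F`-algebra
homomorphism `φ : E → End_F(V)` (where `E` is the field with `q^h` elements, making
`V` an `E`-vector space) such that `D` consists exactly of the `1`-dimensional
`E`-subspaces `E·v = {φ(α)(v) : α ∈ E}` of `V`, regarded as `F`-subspaces. -/
def IsDesSpread {F V : Type} (E : Type) [Field F] [Field E] [Algebra F E]
    [AddCommGroup V] [Module F V] (D : Set (Submodule F V)) : Prop :=
  ∃ φ : E →ₐ[F] Module.End F V,
    D = {W : Submodule F V | ∃ v : V, v ≠ 0 ∧ (W : Set V) = Set.range fun α : E => φ α v}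

/-- `x ↦ x yᵀ` as a linear map. -/
def colMap {F : Type} [Field F] {k h : ℕ} (y : Fin h → F) :
    (Fin k → F) →ₗ[F] Matrix (Fin k) (Fin h) F where
  toFun x := Matrix.vecMulVec x y
  map_add' a b := by ext i j; simp [Matrix.vecMulVec_apply, add_mul]
  map_smul' a b := by ext i j; simp [Matrix.vecMulVec_apply, mul_assoc]

/-- column extraction. -/
def getCol {F : Type} [Field F] {k h : ℕ} (m : Fin h) :
    Matrix (Fin k) (Fin h) F →ₗ[F] (Fin k → F) where
  toFun M := fun i => M i m
  map_add' a b := by ext i; simp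
  map_smul' a b := by ext i; simp

theorem getCol_vecMulVec {F : Type} [Field F] {k h : ℕ} (m : Fin h) (x : Fin k → F)
    (y : Fin h → F) : getCol m (Matrix.vecMulVec x y) = y m • x := by
  ext i; simp [getCol, Matrix.vecMulVec_apply, mul_comm]

theorem key {F : Type} [Field F] {k h : ℕ} (x : Fin (k + 1) → Fin k → F)
    (hspan : ∀ i, Submodule.span F (x '' {j | j ≠ i}) = ⊤)
    (T : Matrix (Fin k) (Fin h) F →ₗ[F] Matrix (Fin k) (Fin h) F)
    (hT : ∀ i y, ∃ y', T (Matrix.vecMulVec (x i) y) = Matrix.vecMulVec (x i) y')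
    (z : Fin k → F) (y : Fin h → F) :
    ∃ y', T (Matrix.vecMulVec z y) = Matrix.vecMulVec z y' := by
  have hsp : ⊤ ≤ Submodule.span F (Set.range fun j : Fin k => x j.castSucc) := by
    rw [← hspan (Fin.last k)]
    apply Submodule.span_mono
    rintro _ ⟨j, hj, rfl⟩
    exact ⟨j.castPred hj, by simp⟩
  have hli : LinearIndependent F (fun j : Fin k => x j.castSucc) :=
    linearIndependent_of_top_le_span_of_card_eq_finrank hsp (by simp)
  let b := Module.Basis.mk hli hsp
  have hb : ∀ j, b j = x j.castSucc := fun j => by simp [b]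
  have hc : ∀ j, b.coord j (x (Fin.last k)) ≠ 0 := by
    intro j h0
    have h1 : Submodule.span F (x '' {i | i ≠ j.castSucc}) ≤ LinearMap.ker (b.coord j) := by
      rw [Submodule.span_le]
      rintro _ ⟨i, hi, rfl⟩
      induction i using Fin.lastCases with
      | last => exact h0
      | cast i =>
        have hij : i ≠ j := fun e => hi (by rw [e])
        change b.coord j _ = 0
        rw [← hb i, Module.Basis.coord_apply, Module.Basis.repr_self]
        simp [hij]
    rw [hspan] at h1
    have h2 : b.coord j (b j) = 0 := h1 (Submodule.mem_top)
    simp at h2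
  choose A hA using fun i => hT i y
  refine ⟨A (Fin.last k), ?_⟩
  have hAj : ∀ j : Fin k, A j.castSucc = A (Fin.last k) := by
    intro j
    ext m
    have hx : ∑ i, b.coord i (x (Fin.last k)) • b i = x (Fin.last k) := b.sum_repr _
    have e1 : T (colMap y (x (Fin.last k))) = colMap (A (Fin.last k)) (x (Fin.last k)) :=
      hA (Fin.last k)
    have e2 : ∀ i, T (colMap y (b i)) = colMap (A i.castSucc) (b i) := by
      intro i; rw [hb]; exact hA _
    have e3 : T (colMap y (x (Fin.last k))) =
        ∑ i, b.coord i (x (Fin.last k)) • colMap (A i.castSucc) (b i) := by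
      conv_lhs => rw [← hx]
      simp only [map_sum, map_smul, e2]
    rw [e1] at e3
    have e4 := congrArg (fun M => b.coord j (getCol m M)) e3
    have g : ∀ (v : Fin k → F) (w : Fin h → F), getCol m (colMap w v) = w m • v :=
      fun v w => getCol_vecMulVec m v w
    simp only [map_sum, map_smul, g] at e4
    rw [Finset.sum_eq_single j] at e4
    · have := hc j
      simp only [smul_eq_mul] at e4
      have h5 : b.coord j (b j) = 1 := by simp
      rw [h5, mul_one, mul_comm] at e4
      exact (mul_left_cancel₀ this e4).symm
    · intro i _ hi
      have h5 : b.coord j (b i) = 0 := by simp [hi]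
      rw [h5]; simp
    · simp
  have : T ∘ₗ colMap y = colMap (A (Fin.last k)) := by
    apply b.ext
    intro j
    rw [LinearMap.comp_apply, hb]
    exact (hA j.castSucc).trans (by rw [hAj]; rfl)
  exact LinearMap.congr_fun this z

/-- Let `P = {Sg 1, …, Sg (k+1)}` be a pseudo-arc of `PG(V)` of size
`k+1` and `φm : V ≃ M_{k×h}(F_q)` a linear identification carrying each member of `P`
to a rank-one block `{x yᵀ : y}`; the family `R_{h,q}` of all preimages of rank-one
blocks is the `(h-1)`-regulus of the unique Segre variety containing `P`.  If `D` is a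
Desarguesian `(h-1)`-spread with `P ⊆ D`, then `R_{h,q} ⊆ D`. -/
theorem stmt7 (q k h : ℕ) (hq : IsPrimePow q) (hk : 2 ≤ k) (hh : 2 ≤ h)
    (F : Type) [Field F] [Fintype F] (hF : Fintype.card F = q)
    (E : Type) [Field E] [Fintype E] [Algebra F E] (hE : Fintype.card E = q ^ h)
    (V : Type) [AddCommGroup V] [Module F V] (hV : Module.finrank F V = k * h)
    (Sg : Fin (k + 1) → Submodule F V) (hinj : Function.Injective Sg)
    (hrk : ∀ i, Module.finrank F (Sg i) = h)
    (hsp : ∀ i : Fin (k + 1), (⨆ j ≠ i, Sg j) = ⊤)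
    (φm : V ≃ₗ[F] Matrix (Fin k) (Fin h) F) (x : Fin (k + 1) → Fin k → F)
    (hx : ∀ i, x i ≠ 0) (hmap : ∀ i, ⇑φm '' (Sg i : Set V) = blockSet (x i))
    (D : Set (Submodule F V)) (hD : IsDesSpread E D) (hPD : ∀ i, Sg i ∈ D) :
    {W : Submodule F V | ∃ z : Fin k → F, z ≠ 0 ∧
      ⇑φm '' (W : Set V) = blockSet z} ⊆ D := by
  obtain ⟨φ, rfl⟩ := hD
  rintro W ⟨z, hz, hW⟩
  have hspan : ∀ i, Submodule.span F (x '' {j | j ≠ i}) = ⊤ := by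
    intro i
    rw [eq_top_iff]
    intro w _
    let m : Fin h := ⟨0, by omega⟩
    have h1 : (⨆ j ≠ i, Sg j) ≤
        (Submodule.span F (x '' {j | j ≠ i})).comap (getCol m ∘ₗ φm.toLinearMap) := by
      refine iSup₂_le fun j hj v hv => ?_
      have : φm v ∈ blockSet (h := h) (x j) := by
        rw [← hmap]; exact ⟨v, hv, rfl⟩
      obtain ⟨y, hy⟩ := this
      change getCol m (φm v) ∈ Submodule.span F (x '' {j | j ≠ i})
      rw [hy, getCol_vecMulVec]
      exact Submodule.smul_mem _ _ (Submodule.subset_span ⟨j, hj, rfl⟩)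
    rw [hsp] at h1
    have h2 : getCol m (φm (φm.symm (Matrix.vecMulVec w 1))) ∈
        Submodule.span F (x '' {j | j ≠ i}) :=
      h1 (Submodule.mem_top (x := φm.symm (Matrix.vecMulVec w 1)))
    rw [LinearEquiv.apply_symm_apply, getCol_vecMulVec] at h2
    simpa using h2
  have hinvS : ∀ i α v, v ∈ Sg i → φ α v ∈ Sg i := by
    intro i α v hv
    obtain ⟨u, _, hu⟩ := hPD i
    have hv' : v ∈ (Sg i : Set V) := hv
    rw [hu] at hv'
    obtain ⟨β, rfl⟩ := hv'
    change _ ∈ (Sg i : Set V)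
    rw [hu]
    exact ⟨α * β, by simp⟩
  have hmem : ∀ (U : Submodule F V) (w : Fin k → F), φm '' (U : Set V) = blockSet w →
      ∀ v, v ∈ U ↔ φm v ∈ blockSet (h := h) w := by
    intro U w hU v
    rw [← hU]
    simp
  have hinvW : ∀ α v, v ∈ W → φ α v ∈ W := by
    intro α v hv
    obtain ⟨y, hy⟩ := (hmem W z hW v).1 hv
    rw [hmem W z hW]
    have := key x hspan (φm.toLinearMap ∘ₗ φ α ∘ₗ φm.symm.toLinearMap) (by
      intro i y
      have h1 := hinvS i α (φm.symm (Matrix.vecMulVec (x i) y))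
        ((hmem _ _ (hmap i) _).2 ⟨y, by simp⟩)
      exact (hmem _ _ (hmap i) _).1 h1) z y
    rw [← hy] at this
    obtain ⟨y', hy'⟩ := this
    exact ⟨y', by simpa using hy'⟩
  let m : Fin h := ⟨0, by omega⟩
  have hzy : ∀ y : Fin h → F, Matrix.vecMulVec z y = 0 → y = 0 := by
    intro y h0
    ext j
    have := getCol_vecMulVec j z y
    rw [h0, map_zero] at this
    exact (smul_eq_zero.1 this.symm).resolve_right hz
  let v : V := φm.symm (Matrix.vecMulVec z 1)
  have hvW : v ∈ W := (hmem W z hW v).2 ⟨1, by simp [v]⟩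
  have hv0 : v ≠ 0 := by
    intro h0
    have := hzy 1 (by simpa [v] using h0)
    exact one_ne_zero (congrFun this m)
  refine ⟨v, hv0, ?_⟩
  have hinjE : Function.Injective fun α : E => φ α v := by
    intro α β hab
    by_contra hne
    have hs : α - β ≠ 0 := sub_ne_zero.2 hne
    have h1 : φ (α - β) v = 0 := by
      simp only [map_sub, LinearMap.sub_apply]; exact sub_eq_zero.2 hab
    have h2 : φ ((α - β)⁻¹ * (α - β)) v = 0 := by
      rw [map_mul, Module.End.mul_apply, h1, map_zero]
    rw [inv_mul_cancel₀ hs, map_one] at h2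
    exact hv0 h2
  have hWr : (W : Set V) ⊆ Set.range fun y : Fin h → F => φm.symm (Matrix.vecMulVec z y) := by
    intro w hw
    obtain ⟨y, hy⟩ := (hmem W z hW w).1 hw
    exact ⟨y, by simp [← hy]⟩
  have hfin : (W : Set V).Finite := (Set.finite_range _).subset hWr
  symm
  apply Set.eq_of_subset_of_ncard_le _ _ hfin
  · rintro _ ⟨α, rfl⟩
    exact hinvW α v hvW
  · calc (W : Set V).ncard
        ≤ (Set.range fun y : Fin h → F => φm.symm (Matrix.vecMulVec z y)).ncard :=
          Set.ncard_le_ncard hWr (Set.finite_range _)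
      _ ≤ Nat.card (Fin h → F) := by
          rw [← Set.image_univ, ← Set.ncard_univ]
          exact Set.ncard_image_le
      _ = q ^ h := by simp [hF]
      _ = (Set.range fun α : E => φ α v).ncard := by
          rw [← Set.image_univ, Set.ncard_image_of_injective _ hinjE, Set.ncard_univ,
            Nat.card_eq_fintype_card, hE]
end

section
/- Let q > 2 be a prime power, k, h ≥ 2, and V a kh-dimensional F_q-vector space. Let P be a pseudo-arc of PG(V) of size k+1, and let D, D' be two distinct Desarguesian (h-1)-spreads of PG(V) with P ⊆ D ∩ D'. Then there exists a proper divisor r of h such that |D ∩ D'| = (q^{kr} - 1)/(q^r - 1). Moreover, there exist an F_q-algebra homomorphism φ : F_{q^h} → End_{F_q}(V) making V an F_{q^h}-vector space whose 1-dimensional F_{q^h}-subspaces constitute D, and an F_{q^h}-basis (e₁,...,e_k) of V, such that D ∩ D' is exactly the set of subspaces F_{q^h}·v where v ranges over the nonzero F_{q^r}-linear combinations of e₁,...,e_k. -/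
/-- The subfield of elements over which `g` is semilinear-compatible. -/
noncomputable def compatField {F E : Type} [Field F] [Field E] [Fintype E] [Algebra F E]
    (g : E ≃ₗ[F] E) (g1 : g 1 = 1) : IntermediateField F E :=
  Subalgebra.toIntermediateField
    { carrier := {a : E | ∀ x, g (x * g.symm a) = g x * a}
      mul_mem' := by
        intro a b ha hb x
        have h1 : g.symm (a * b) = g.symm a * g.symm b := by
          apply g.injective
          rw [hb (g.symm a)]; simp
        rw [h1, ← mul_assoc, hb, ha, mul_assoc]
      add_mem' := by
        intro a b ha hb x
        rw [map_add, mul_add, map_add, ha, hb, mul_add]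
      algebraMap_mem' := by
        intro c x
        have h1 : g.symm (algebraMap F E c) = algebraMap F E c := by
          apply g.injective
          rw [Algebra.algebraMap_eq_smul_one]; simp [g1]
        rw [h1, mul_comm, ← Algebra.smul_def, map_smul, Algebra.smul_def, mul_comm] }
    (by
      intro a ha
      by_cases h0 : a = 0
      · subst h0; simp
      have h2 : 2 ≤ Fintype.card E := Fintype.one_lt_card
      have : a⁻¹ = a ^ (Fintype.card E - 2) := by
        symm
        apply eq_inv_of_mul_eq_one_left
        rw [← pow_succ, ← FiniteField.pow_card_sub_one_eq_one a h0]
        congr 1; omega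
      rw [this]
      exact pow_mem ha _)

theorem mem_compatField {F E : Type} [Field F] [Field E] [Fintype E] [Algebra F E]
    (g : E ≃ₗ[F] E) (g1 : g 1 = 1) (a : E) :
    a ∈ compatField g g1 ↔ ∀ x, g (x * g.symm a) = g x * a := Iff.rfl

theorem mem_iff_pow {F E : Type} [Field F] [Fintype F] [Field E] [Fintype E] [Algebra F E]
    (K : IntermediateField F E) (a : E) :
    a ∈ K ↔ a ^ (Fintype.card F ^ (Module.finrank F K)) = a := by
  classical
  have hcard : Fintype.card K = Fintype.card F ^ (Module.finrank F K) :=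
    Module.card_eq_pow_finrank
  rw [← hcard]
  constructor
  · intro ha
    have := FiniteField.pow_card (⟨a, ha⟩ : K)
    simpa using congrArg Subtype.val this
  · intro ha
    have h1 : 1 < Fintype.card K := Fintype.one_lt_card
    set P : Polynomial E := Polynomial.X ^ (Fintype.card K) - Polynomial.X with hP
    have hP0 : P ≠ 0 := FiniteField.X_pow_card_sub_X_ne_zero E h1
    have hd : P.natDegree = Fintype.card K := FiniteField.X_pow_card_sub_X_natDegree_eq E h1
    set S : Finset E := Finset.univ.image (Subtype.val : K → E) with hS
    have hSc : S.card = Fintype.card K := by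
      rw [hS, Finset.card_image_of_injective _ Subtype.val_injective, Finset.card_univ]
    have hsub : S ⊆ P.roots.toFinset := by
      intro x hx
      simp only [hS, Finset.mem_image, Finset.mem_univ, true_and] at hx
      obtain ⟨y, rfl⟩ := hx
      have := congrArg Subtype.val (FiniteField.pow_card y)
      simp [hP0]
      simp [hP, sub_eq_zero]
      simpa using this
    have hle : P.roots.toFinset.card ≤ S.card := by
      rw [hSc, ← hd]
      exact (Multiset.toFinset_card_le _).trans (Polynomial.card_roots' P)
    have heq := Finset.eq_of_subset_of_card_le hsub hle
    have : a ∈ S := by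
      rw [heq]; simp [hP0]; simp [hP, ha]
    simp only [hS, Finset.mem_image, Finset.mem_univ, true_and] at this
    obtain ⟨y, rfl⟩ := this
    exact y.2

section maps
variable {F E V : Type} [Field F] [Field E] [Algebra F E] [AddCommGroup V] [Module F V]
  (φ : E →ₐ[F] Module.End F V)

theorem act_mul (a b : E) (v : V) : φ (a * b) v = φ a (φ b v) := by
  rw [map_mul]; rfl

theorem act_inj {v : V} (hv : v ≠ 0) {a : E} (h : φ a v = 0) : a = 0 := by
  by_contra ha
  apply hv
  have := act_mul φ a⁻¹ a v
  rw [h, inv_mul_cancel₀ ha] at this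
  simpa using this

theorem act_range {v w : V} (hw : w ≠ 0) (h : w ∈ Set.range fun a : E => φ a v) :
    (Set.range fun a : E => φ a w) = Set.range fun a : E => φ a v := by
  obtain ⟨b, rfl⟩ := h
  have hb : b ≠ 0 := by
    rintro rfl
    simp at hw
  ext x
  constructor
  · rintro ⟨a, rfl⟩
    exact ⟨a * b, act_mul φ a b v⟩
  · rintro ⟨a, rfl⟩
    refine ⟨a * b⁻¹, ?_⟩
    simp only
    rw [← act_mul, mul_assoc, inv_mul_cancel₀ hb, mul_one]

/-- The coordinate map. -/
noncomputable def coordMap {k : ℕ} (w : Fin k → V) : (Fin k → E) →ₗ[F] V :=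
  ∑ i, (φ.toLinearMap.flip (w i)) ∘ₗ LinearMap.proj i

theorem coordMap_apply {k : ℕ} (w : Fin k → V) (c : Fin k → E) :
    coordMap φ w c = ∑ i, φ (c i) (w i) := by
  simp [coordMap]

theorem coordMap_smul {k : ℕ} (w : Fin k → V) (a : E) (c : Fin k → E) :
    φ a (coordMap φ w c) = coordMap φ w (fun i => a * c i) := by
  simp [coordMap_apply, act_mul]

theorem coordMap_single {k : ℕ} (w : Fin k → V) (a : E) (j : Fin k) :
    coordMap φ w (Pi.single j a) = φ a (w j) := by
  rw [coordMap_apply, Finset.sum_eq_single j]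
  · simp
  · intro b _ hb
    simp [Pi.single_eq_of_ne hb]
  · simp

end maps

theorem exists_frame {k h : ℕ} (hh : 2 ≤ h) (hk : 2 ≤ k)
    {F E V : Type} [Field F] [Field E] [Fintype E] [Algebra F E] [AddCommGroup V] [Module F V]
    (φ : E →ₐ[F] Module.End F V) (hE : Module.finrank F E = h)
    (hV : Module.finrank F V = k * h)
    (Sg : Fin (k + 1) → Submodule F V)
    (hsp : ∀ i : Fin (k + 1), (⨆ j ≠ i, Sg j) = ⊤)
    (hS : ∀ i, ∃ v : V, v ≠ 0 ∧ (Sg i : Set V) = Set.range fun α : E => φ α v) :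
    ∃ e : Fin k → V, Function.Bijective (coordMap φ e) ∧
      (∀ i, e i ≠ 0 ∧ (Sg i.castSucc : Set V) = Set.range fun α : E => φ α (e i)) ∧
      (∑ i, e i ≠ 0) ∧ (Sg (Fin.last k) : Set V) = Set.range fun α : E => φ α (∑ i, e i) := by
  classical
  choose w hw0 hw using hS
  have hfd : FiniteDimensional F V := FiniteDimensional.of_finrank_pos (by rw [hV]; positivity)
  have hfe : FiniteDimensional F E := FiniteDimensional.of_finrank_pos (by rw [hE]; positivity)
  set T := coordMap φ (fun i : Fin k => w i.castSucc) with hT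
  have hsurj : Function.Surjective T := by
    rw [← LinearMap.range_eq_top, eq_top_iff, ← hsp (Fin.last k)]
    refine iSup₂_le ?_
    intro j hj x hx
    have hx' : x ∈ (Sg j : Set V) := hx
    rw [hw j] at hx'
    obtain ⟨a, rfl⟩ := hx'
    obtain ⟨i, rfl⟩ := Fin.exists_castSucc_eq.mpr hj
    exact ⟨Pi.single i a, coordMap_single φ _ a i⟩
  have hinj : Function.Injective T := by
    rw [LinearMap.injective_iff_surjective_of_finrank_eq_finrank]
    · exact hsurj
    · rw [hV, Module.finrank_pi_fintype]; simp [hE]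
  obtain ⟨c, hc⟩ := hsurj (w (Fin.last k))
  have hc0 : ∀ i, c i ≠ 0 := by
    intro i hi
    have : (⊤ : Submodule F V) ≤ (LinearMap.ker (LinearMap.proj i : (Fin k → E) →ₗ[F] E)).map T := by
      rw [← hsp i.castSucc]
      refine iSup₂_le ?_
      intro j hj x hx
      have hx' : x ∈ (Sg j : Set V) := hx
      rw [hw j] at hx'
      obtain ⟨a, rfl⟩ := hx'
      by_cases hjl : j = Fin.last k
      · subst hjl
        refine ⟨fun i => a * c i, ?_, ?_⟩
        · simp [hi]
        · simp only [← hc, hT, coordMap_smul]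
      · obtain ⟨l, rfl⟩ := Fin.exists_castSucc_eq.mpr hjl
        refine ⟨Pi.single l a, ?_, coordMap_single φ _ a l⟩
        have : i ≠ l := by rintro rfl; exact hj rfl
        simp [Pi.single_eq_of_ne this]
    obtain ⟨d, hd, hd'⟩ := this (Submodule.mem_top (x := T (Pi.single i 1)))
    have := hinj hd'
    subst this
    simp at hd
  have he0 : ∀ i : Fin k, φ (c i) (w i.castSucc) ≠ 0 := fun i hi =>
    hc0 i (act_inj φ (hw0 _) hi)
  have hsum : ∑ i : Fin k, φ (c i) (w i.castSucc) = w (Fin.last k) := by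
    rw [← hc, hT, coordMap_apply]
  have hTe : ∀ d, coordMap φ (fun i => φ (c i) (w i.castSucc)) d = T (fun i => d i * c i) := by
    intro d; simp [hT, coordMap_apply, act_mul]
  refine ⟨fun i => φ (c i) (w i.castSucc), ⟨?_, ?_⟩, ?_, ?_, ?_⟩
  · intro d d' hdd
    rw [hTe, hTe] at hdd
    ext i
    exact mul_right_cancel₀ (hc0 i) (congrFun (hinj hdd) i)
  · intro x
    obtain ⟨d, rfl⟩ := hsurj x
    refine ⟨fun i => d i * (c i)⁻¹, ?_⟩
    rw [hTe]
    congr 1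
    ext i
    simp [mul_assoc, hc0 i]
  · intro i
    refine ⟨he0 i, ?_⟩
    rw [hw, act_range φ (he0 i) ⟨_, rfl⟩]
  · rw [hsum]; exact hw0 _
  · rw [hsum]; exact hw _

/-- Existence of the semilinear comparison map between the two structures. -/
theorem exists_g {k h : ℕ} (hk : 2 ≤ k)
    {F E V : Type} [Field F] [Field E] [Fintype E] [Algebra F E] [AddCommGroup V] [Module F V]
    (φ φ' : E →ₐ[F] Module.End F V) (e : Fin k → V) (hb : Function.Bijective (coordMap φ e))
    (S : Fin k → Submodule F V) (L : Submodule F V)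
    (he : ∀ i, e i ≠ 0 ∧ (S i : Set V) = Set.range fun α : E => φ α (e i))
    (hs0 : ∑ i, e i ≠ 0) (hs : (L : Set V) = Set.range fun α : E => φ α (∑ i, e i))
    (hS' : ∀ i, ∃ v : V, v ≠ 0 ∧ (S i : Set V) = Set.range fun α : E => φ' α v)
    (hL' : ∃ v : V, v ≠ 0 ∧ (L : Set V) = Set.range fun α : E => φ' α v) :
    ∃ g : E ≃ₗ[F] E, g 1 = 1 ∧ ∀ (a : E) (b : Fin k → E),
      φ' a (coordMap φ e (fun i => g (b i))) = coordMap φ e (fun i => g (a * b i)) := by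
  classical
  have hone : ∀ i, φ (1 : E) (e i) = e i := by intro i; simp
  have hS2 : ∀ i, (S i : Set V) = Set.range fun α : E => φ' α (e i) := by
    intro i
    obtain ⟨v, hv, hv'⟩ := hS' i
    rw [hv', act_range φ' (he i).1]
    rw [← hv', (he i).2]; exact ⟨1, hone i⟩
  have hL2 : (L : Set V) = Set.range fun α : E => φ' α (∑ i, e i) := by
    obtain ⟨v, hv, hv'⟩ := hL'
    rw [hv', act_range φ' hs0]
    rw [← hv', hs]; exact ⟨1, by simp⟩
  have hex : ∀ a : E, ∃ b : E, φ b (∑ i, e i) = φ' a (∑ i, e i) := by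
    intro a
    have : φ' a (∑ i, e i) ∈ (L : Set V) := by rw [hL2]; exact ⟨a, rfl⟩
    rw [hs] at this
    exact this
  choose g hg using hex
  have hginj' : ∀ {a b : E}, φ a (∑ i, e i) = φ b (∑ i, e i) → a = b := by
    intro a b hab
    rw [← sub_eq_zero]
    apply act_inj φ hs0
    rw [map_sub, LinearMap.sub_apply, hab, sub_self]
  let G : E →ₗ[F] E :=
    { toFun := g
      map_add' := by
        intro a b
        apply hginj'
        rw [hg, map_add, map_add, LinearMap.add_apply, LinearMap.add_apply, hg, hg]
      map_smul' := by
        intro c a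
        apply hginj'
        rw [hg, map_smul, RingHom.id_apply, map_smul, LinearMap.smul_apply, LinearMap.smul_apply, hg] }
  have hGinj : Function.Injective G := by
    rw [injective_iff_map_eq_zero]
    intro a ha
    apply act_inj φ' hs0
    rw [← hg]
    have : g a = 0 := ha
    rw [this]; simp
  have hGb : Function.Bijective G := Finite.injective_iff_bijective.mp hGinj
  have hge : ∀ a i, φ' a (e i) = φ (g a) (e i) := by
    intro a
    have hex : ∀ i, ∃ d : E, φ d (e i) = φ' a (e i) := by
      intro i
      have : φ' a (e i) ∈ (S i : Set V) := by rw [hS2]; exact ⟨a, rfl⟩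
      rw [(he i).2] at this
      exact this
    choose d hd using hex
    have : coordMap φ e d = coordMap φ e (fun _ => g a) := by
      rw [coordMap_apply, coordMap_apply, ← map_sum, hg, map_sum]
      simp [hd]
    have := hb.1 this
    intro i
    rw [← hd, this]
  refine ⟨LinearEquiv.ofBijective G hGb, ?_, ?_⟩
  · change g 1 = 1
    apply hginj'
    rw [hg]; simp
  · intro a b
    change φ' a (coordMap φ e (fun i => g (b i))) = coordMap φ e (fun i => g (a * b i))
    rw [coordMap_apply, coordMap_apply, map_sum]
    refine Finset.sum_congr rfl fun i _ => ?_
    rw [← hge, ← hge, act_mul]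

/-- The set of spread elements. -/
def spreadOf {F E V : Type} [Field F] [Field E] [Algebra F E] [AddCommGroup V] [Module F V]
    (φ : E →ₐ[F] Module.End F V) : Set (Submodule F V) :=
  {W : Submodule F V | ∃ v : V, v ≠ 0 ∧ (W : Set V) = Set.range fun α : E => φ α v}

theorem inter_eq {k : ℕ}
    {F E V : Type} [Field F] [Field E] [Fintype E] [Algebra F E] [AddCommGroup V] [Module F V]
    (φ φ' : E →ₐ[F] Module.End F V) (e : Fin k → V) (hb : Function.Bijective (coordMap φ e))
    (g : E ≃ₗ[F] E) (g1 : g 1 = 1) (hg : ∀ (a : E) (b : Fin k → E),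
      φ' a (coordMap φ e (fun i => g (b i))) = coordMap φ e (fun i => g (a * b i))) :
    spreadOf φ ∩ spreadOf φ' = {W : Submodule F V | ∃ c : Fin k → E,
      (∀ i, c i ∈ compatField g g1) ∧ coordMap φ e c ≠ 0 ∧
      (W : Set V) = Set.range fun α : E => φ α (coordMap φ e c)} := by
  have hg' : ∀ (a : E) (c : Fin k → E),
      φ' a (coordMap φ e c) = coordMap φ e (fun i => g (a * g.symm (c i))) := by
    intro a c
    rw [← hg]; simp
  have gs1 : g.symm 1 = 1 := by rw [LinearEquiv.symm_apply_eq, g1]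
  ext W
  constructor
  · rintro ⟨⟨x, hx, hW⟩, ⟨y, hy, hW'⟩⟩
    obtain ⟨d, rfl⟩ := hb.2 x
    have : ∃ j, d j ≠ 0 := by
      by_contra hcon
      push Not at hcon
      apply hx
      rw [show d = 0 from funext hcon, map_zero]
    obtain ⟨j, hj⟩ := this
    set c : Fin k → E := fun i => (d j)⁻¹ * d i with hc
    have hcj : c j = 1 := by simp [hc, hj]
    have hc0 : coordMap φ e c ≠ 0 := by
      rw [← map_zero (coordMap φ e)]
      intro h
      have := congrFun (hb.1 h) j
      rw [hcj] at this
      simp at this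
    have hmem : coordMap φ e c ∈ Set.range fun α : E => φ α (coordMap φ e d) :=
      ⟨(d j)⁻¹, coordMap_smul φ e _ _⟩
    have hWc : (W : Set V) = Set.range fun α : E => φ α (coordMap φ e c) := by
      rw [hW, act_range φ hc0 hmem]
    have hWc' : (W : Set V) = Set.range fun α : E => φ' α (coordMap φ e c) := by
      rw [hW', act_range φ' hc0]
      rw [← hW', hW]; exact hmem
    refine ⟨c, ?_, hc0, hWc⟩
    intro i
    rw [mem_compatField]
    intro a
    have : φ' a (coordMap φ e c) ∈ (W : Set V) := by rw [hWc']; exact ⟨a, rfl⟩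
    rw [hWc] at this
    obtain ⟨l, hl⟩ := this
    simp only [coordMap_smul, hg'] at hl
    have hl := hb.1 hl
    have h1 := congrFun hl j
    have h2 := congrFun hl i
    simp only [hcj, gs1, mul_one] at h1
    rw [← h2, h1]
  · rintro ⟨c, hc, hc0, hW⟩
    refine ⟨⟨_, hc0, hW⟩, ⟨_, hc0, ?_⟩⟩
    rw [hW]
    have key : ∀ a, φ' a (coordMap φ e c) = φ (g a) (coordMap φ e c) := by
      intro a
      rw [hg', coordMap_smul]
      congr 1
      ext i
      exact hc i a
    simp only [key]
    exact (g.surjective.range_comp (fun α => φ α (coordMap φ e c))).symm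

theorem card_eq {k : ℕ}
    {F E V : Type} [Field F] [Field E] [Fintype E] [Algebra F E] [AddCommGroup V] [Module F V]
    (φ : E →ₐ[F] Module.End F V) (e : Fin k → V) (hb : Function.Bijective (coordMap φ e))
    (K : IntermediateField F E) :
    {W : Submodule F V | ∃ c : Fin k → E,
      (∀ i, c i ∈ K) ∧ coordMap φ e c ≠ 0 ∧
      (W : Set V) = Set.range fun α : E => φ α (coordMap φ e c)}.ncard * (Nat.card K - 1)
      = Nat.card K ^ k - 1 := by
  classical
  let ι : (Fin k → K) → V := fun c => coordMap φ e (fun i => (c i : E))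
  have hι0 : ∀ c, c ≠ 0 → ι c ≠ 0 := by
    intro c hc h
    apply hc
    have h : coordMap φ e (fun i => (c i : E)) = coordMap φ e 0 := by rw [map_zero]; exact h
    ext i
    simpa using congrFun (hb.1 h) i
  let f : (Fin k → K) → Submodule F V := fun c => LinearMap.range (φ.toLinearMap.flip (ι c))
  have hf : ∀ c, (f c : Set V) = Set.range fun α : E => φ α (ι c) := by
    intro c; rfl
  have hfiff : ∀ c d : Fin k → K, c ≠ 0 → d ≠ 0 → (f c = f d ↔ ∃ a : K, a • d = c) := by
    intro c d hc hd
    constructor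
    · intro h
      have : ι c ∈ (f d : Set V) := by rw [← h, hf]; exact ⟨1, by simp⟩
      rw [hf] at this
      obtain ⟨a, ha⟩ := this
      simp only [ι, coordMap_smul] at ha
      have ha := hb.1 ha
      obtain ⟨j, hj⟩ := Function.ne_iff.mp hd
      have hj' : (d j : E) ≠ 0 := by simpa using hj
      have haK : a ∈ K := by
        have h1 : a * d j = c j := congrFun ha j
        rw [← eq_mul_inv_iff_mul_eq₀ hj'] at h1
        rw [h1]
        exact mul_mem (c j).2 (inv_mem (d j).2)
      refine ⟨⟨a, haK⟩, ?_⟩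
      ext i
      exact congrFun ha i
    · rintro ⟨a, rfl⟩
      apply SetLike.coe_injective
      rw [hf, hf]
      apply act_range φ (hι0 _ hc)
      refine ⟨(a : E), ?_⟩
      simp only [ι, coordMap_smul]
      rfl
  let f' : {v : Fin k → K // v ≠ 0} → Submodule F V := fun c => f c.1
  have hset : {W : Submodule F V | ∃ c : Fin k → E,
      (∀ i, c i ∈ K) ∧ coordMap φ e c ≠ 0 ∧
      (W : Set V) = Set.range fun α : E => φ α (coordMap φ e c)} =
      Set.range (Projectivization.lift (K := K) (V := Fin k → K) f' (by
        rintro ⟨a, ha⟩ ⟨b, hb⟩ t h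
        exact (hfiff a b ha hb).2 ⟨t, h.symm⟩)) := by
    ext W
    constructor
    · rintro ⟨c, hc, hc0, hW⟩
      have hne : (fun i => (⟨c i, hc i⟩ : K)) ≠ 0 := by
        intro h
        apply hc0
        have : c = 0 := by
          ext i
          exact congrArg Subtype.val (congrFun h i)
        rw [this, map_zero]
      refine ⟨Projectivization.mk K (fun i => (⟨c i, hc i⟩ : K)) hne, ?_⟩
      rw [Projectivization.lift_mk]
      apply SetLike.coe_injective
      rw [hW]; rfl
    · rintro ⟨p, rfl⟩
      induction p using Projectivization.ind with
      | h v hv =>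
        rw [Projectivization.lift_mk]
        exact ⟨fun i => (v i : E), fun i => (v i).2, hι0 v hv, hf v⟩
  rw [hset, ← Nat.card_coe_set_eq, Nat.card_range_of_injective]
  · rw [← Projectivization.card]
    simp [Nat.card_fun]
  · intro p p' h
    induction p using Projectivization.ind with
    | h v hv =>
      induction p' using Projectivization.ind with
      | h w hw =>
        rw [Projectivization.lift_mk, Projectivization.lift_mk] at h
        rw [Projectivization.mk_eq_mk_iff']
        exact (hfiff v w hv hw).1 h

/-- **main theorem.** Let `q > 2` be a prime power, `Sg` a pseudo-arc of
`PG(kh-1, q)` of size `k+1`, and `D ≠ D'` two Desarguesian `(h-1)`-spreads both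
containing the pseudo-arc.  Then there is a proper divisor `r` of `h` with
`|D ∩ D'| = (q^{kr} - 1)/(q^r - 1)`; moreover there are an `F_q`-algebra homomorphism
`φ : F_{q^h} → End(V)` realising `D` as the corresponding spread and an
`F_{q^h}`-basis `e` of `V` such that `D ∩ D'` consists exactly of the subspaces
`F_{q^h}·v` where `v` ranges over the nonzero `F_{q^r}`-linear combinations of the
basis vectors (`F_{q^r} = {c | c ^ (q^r) = c}`). -/
theorem stmt8 (q k h : ℕ) (hq : IsPrimePow q) (hq2 : 2 < q) (hk : 2 ≤ k) (hh : 2 ≤ h)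
    (F : Type) [Field F] [Fintype F] (hF : Fintype.card F = q)
    (E : Type) [Field E] [Fintype E] [Algebra F E] (hE : Fintype.card E = q ^ h)
    (V : Type) [AddCommGroup V] [Module F V] (hV : Module.finrank F V = k * h)
    (Sg : Fin (k + 1) → Submodule F V) (hinj : Function.Injective Sg)
    (hrk : ∀ i, Module.finrank F (Sg i) = h)
    (hsp : ∀ i : Fin (k + 1), (⨆ j ≠ i, Sg j) = ⊤)
    (D D' : Set (Submodule F V)) (hD : IsDesSpread E D) (hD' : IsDesSpread E D')
    (hne : D ≠ D') (hPD : ∀ i, Sg i ∈ D) (hPD' : ∀ i, Sg i ∈ D') :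
    ∃ r : ℕ, r ∣ h ∧ r < h ∧
      (D ∩ D').ncard * (q ^ r - 1) = q ^ (k * r) - 1 ∧
      ∃ φ : E →ₐ[F] Module.End F V,
        (D = {W : Submodule F V | ∃ v : V, v ≠ 0 ∧
          (W : Set V) = Set.range fun α : E => φ α v}) ∧
        ∃ e : Fin k → V,
          (∀ v : V, ∃! c : Fin k → E, v = ∑ i, φ (c i) (e i)) ∧
          D ∩ D' = {W : Submodule F V | ∃ c : Fin k → E,
            (∀ i, c i ^ q ^ r = c i) ∧ (∑ i, φ (c i) (e i)) ≠ 0 ∧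
            (W : Set V) = Set.range fun α : E => φ α (∑ i, φ (c i) (e i))} := by
  classical
  obtain ⟨φ, rfl⟩ := hD
  obtain ⟨φ', rfl⟩ := hD'
  have hEr : Module.finrank F E = h := by
    have h1 : Fintype.card E = Fintype.card F ^ Module.finrank F E := Module.card_eq_pow_finrank
    rw [hE, hF] at h1
    exact (Nat.pow_right_injective (by omega : 2 ≤ q) h1).symm
  obtain ⟨e, hb, he, hs0, hs⟩ := exists_frame hh hk φ hEr hV Sg hsp hPD
  obtain ⟨g, g1, hg⟩ := exists_g (h := h) hk φ φ' e hb (fun i => Sg i.castSucc) (Sg (Fin.last k))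
    he hs0 hs (fun i => hPD' _) (hPD' _)
  have hint := inter_eq φ φ' e hb g g1 hg
  have hcard := card_eq φ e hb (compatField g g1)
  have hmem := mem_iff_pow (compatField g g1)
  have hK : Nat.card (compatField g g1) = q ^ Module.finrank F (compatField g g1) := by
    rw [← hF, Nat.card_eq_fintype_card]; exact Module.card_eq_pow_finrank
  rw [hF] at hmem
  have hdvd : Module.finrank F (compatField g g1) ∣ h :=
    ⟨Module.finrank (compatField g g1) E, by rw [Module.finrank_mul_finrank, hEr]⟩
  refine ⟨Module.finrank F (compatField g g1), hdvd, ?_, ?_, φ, rfl, e, ?_, ?_⟩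
  · refine lt_of_le_of_ne (Nat.le_of_dvd (by omega) hdvd) ?_
    intro heq
    apply hne
    have hall : ∀ a, a ∈ compatField g g1 := by
      intro a
      rw [hmem, heq, ← hE]
      exact FiniteField.pow_card a
    have key : ∀ a v, φ' a v = φ (g a) v := by
      intro a v
      obtain ⟨c, rfl⟩ := hb.2 v
      have h1 := hg a (fun i => g.symm (c i))
      simp only [LinearEquiv.apply_symm_apply] at h1
      rw [h1, coordMap_smul]
      congr 1
      ext i
      exact hall (c i) a
    have key2 : ∀ v, (Set.range fun α : E => φ' α v) = Set.range fun α : E => φ α v := by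
      intro v
      simp only [key]
      exact g.surjective.range_comp (fun α => φ α v)
    simp only [key2]
  · change (spreadOf φ ∩ spreadOf φ').ncard * _ = _
    rw [hint, ← hK, hcard, hK, ← pow_mul, mul_comm k]
  · intro v
    obtain ⟨c, hc⟩ := hb.2 v
    refine ⟨c, by simp only; rw [← hc, coordMap_apply], ?_⟩
    intro d hd
    apply hb.1
    rw [hc, coordMap_apply]
    exact hd.symm
  · change spreadOf φ ∩ spreadOf φ' = _
    rw [hint]
    simp only [hmem, coordMap_apply]
end

section
/- Let q be a prime power, k, h ≥ 2, and V a kh-dimensional F_q-vector space. A pseudo-arc P of PG(V) is contained in some Desarguesian (h-1)-spread of PG(V) if and only if there exists an F_q-algebra homomorphism φ : F_{q^h} → End_{F_q}(V) such that every member Σ of P is invariant under φ(α) for all α ∈ F_{q^h} (i.e. each Σ ∈ P is an F_{q^h}-submodule of V for the module structure induced by φ). This is the statement that a pseudo-arc is Desarguesian if and only if it is fixed elementwise by a Singer subgroup of PG(kh-1,q) of order (q^h-1)/(q-1), such subgroups being precisely the projective images of the groups of F_{q^h}-scalar multiplications on V for some F_{q^h}-structure on V. -/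
/-- A pseudo-arc `P` of `PG(V)` (a set of `h`-dimensional subspaces
of the `kh`-dimensional `F_q`-space `V` any `k` of which span `V`) is contained in
some Desarguesian `(h-1)`-spread of `PG(V)` if and only if there is an `F_q`-algebra
homomorphism `φ : F_{q^h} → End_{F_q}(V)` leaving every member of `P` invariant, i.e.
each member of `P` is an `F_{q^h}`-submodule for the structure induced by `φ`.
(This is the fixing-by-a-Singer-subgroup characterization.) -/
theorem stmt11 (q k h : ℕ) (hq : IsPrimePow q) (hk : 2 ≤ k) (hh : 2 ≤ h)
    (F : Type) [Field F] [Fintype F] (hF : Fintype.card F = q)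
    (E : Type) [Field E] [Fintype E] [Algebra F E] (hE : Fintype.card E = q ^ h)
    (V : Type) [AddCommGroup V] [Module F V] (hV : Module.finrank F V = k * h)
    (P : Set (Submodule F V))
    (hrk : ∀ W ∈ P, Module.finrank F W = h)
    (hsp : ∀ T ⊆ P, T.ncard = k → sSup T = ⊤) :
    (∃ D : Set (Submodule F V), IsDesSpread E D ∧ P ⊆ D) ↔
    (∃ φ : E →ₐ[F] Module.End F V, ∀ W ∈ P, ∀ α : E, ∀ v ∈ W, φ α v ∈ W) := by
  constructor
  · rintro ⟨D, ⟨φ, rfl⟩, hP⟩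
    refine ⟨φ, fun W hW α w hw => ?_⟩
    obtain ⟨v, -, hv⟩ := hP hW
    have hw' : w ∈ (W : Set V) := hw
    rw [hv] at hw'
    obtain ⟨β, rfl⟩ := hw'
    change φ α (φ β v) ∈ (W : Set V)
    rw [hv]
    exact ⟨α * β, by simp [map_mul]⟩
  · rintro ⟨φ, hφ⟩
    refine ⟨_, ⟨φ, rfl⟩, fun W hW => ?_⟩
    have hWh := hrk W hW
    have hfE : Module.finrank F E = h := by
      have h1 := Module.card_eq_pow_finrank (K := F) (V := E)
      rw [hE, hF] at h1
      exact (Nat.pow_right_injective hq.two_le h1).symm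
    have hfin : FiniteDimensional F W := Module.finite_of_finrank_pos (by omega)
    have hne : W ≠ ⊥ := by
      rintro rfl
      simp at hWh
      omega
    obtain ⟨v, hvW, hv0⟩ := W.exists_mem_ne_zero_of_ne_bot hne
    refine ⟨v, hv0, ?_⟩
    let f : E →ₗ[F] V := (LinearMap.applyₗ v).comp φ.toLinearMap
    have hf : ∀ α, f α = φ α v := fun α => rfl
    have hinj : Function.Injective f := by
      rw [injective_iff_map_eq_zero]
      intro α hα
      by_contra hα0
      apply hv0
      have h2 : φ (α⁻¹ * α) v = 0 := by
        rw [map_mul, Module.End.mul_apply, ← hf α, hα, map_zero]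
      rwa [inv_mul_cancel₀ hα0, map_one, Module.End.one_apply] at h2
    have hle : LinearMap.range f ≤ W := by
      rintro _ ⟨α, rfl⟩
      exact hφ W hW α v hvW
    have heq := Submodule.eq_of_le_of_finrank_eq hle
      (by rw [LinearMap.finrank_range_of_inj hinj, hfE, hWh])
    rw [← heq]
    rfl
end

section
/- Let q be a prime power, k, h ≥ 2, let V = F_{q^h}^k regarded as a kh-dimensional F_q-vector space, let D_h = { F_{q^h}·u : u ∈ F_{q^h}^k \ {0} } be the field-reduction Desarguesian (h-1)-spread, and let R_{h,q} = { F_{q^h}·w : w ∈ F_q^k \ {0} }. Let v ∈ F_{q^h}^k be nonzero such that the member Ξ = F_{q^h}·v of D_h satisfies Ξ ∩ (F_{q^h}·w) = {0} for every nonzero w ∈ F_q^k (i.e. Ξ is disjoint from the Segre variety whose (h-1)-regulus is R_{h,q}). Then D_h is the unique Desarguesian (h-1)-spread of PG(V) containing Ξ and every member of R_{h,q} if and only if there exist no proper divisor r of h and no β ∈ F_{q^h}^* such that every entry of βv lies in the subfield F_{q^r}. -/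
/-- The field-reduction Desarguesian `(h-1)`-spread of `PG(F_{q^h}^k)` over `F_q`:
its members are the `F_q`-subspaces `F_{q^h}·u` for nonzero `u ∈ F_{q^h}^k`. -/
def fieldReductionSpread (F : Type) [Field F] (E : Type) [Field E] [Algebra F E]
    (k : ℕ) : Set (Submodule F (Fin k → E)) :=
  {W : Submodule F (Fin k → E) | ∃ u : Fin k → E, u ≠ 0 ∧
    (W : Set (Fin k → E)) = Set.range fun α : E => α • u}

/-- The `(h-1)`-regulus `R_{h,q}` of the Segre variety `S_{k-1,h-1}(q)`: the members
`F_{q^h}·w` of the field-reduction spread with `w` a nonzero vector all of whose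
entries lie in `F_q = {x | x ^ q = x}`. -/
def segreRegulus (q : ℕ) (F : Type) [Field F] (E : Type) [Field E] [Algebra F E]
    (k : ℕ) : Set (Submodule F (Fin k → E)) :=
  {W : Submodule F (Fin k → E) | ∃ w : Fin k → E, w ≠ 0 ∧ (∀ i, w i ^ q = w i) ∧
    (W : Set (Fin k → E)) = Set.range fun α : E => α • w}

theorem aux_scalar {F E : Type} [Field F] [Field E] [Algebra F E] {k : ℕ}
    (v : Fin k → E) (j : Fin k) (hj : v j ≠ 0)
    (hK : IntermediateField.adjoin F (Set.range fun i => v i / v j) = ⊤)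
    (T : (Fin k → E) →ₗ[F] (Fin k → E))
    (hT : ∀ w : Fin k → E, w ≠ 0 → (∀ i, ∃ c : F, algebraMap F E c = w i) → ∀ x : E,
      ∃ y : E, T (x • w) = y • w)
    (hTv : ∀ x : E, ∃ y : E, T (x • v) = y • v) :
    ∃ μ : E, ∀ u, T u = μ • u := by
  classical
  let s : E →ₗ[F] E := (LinearMap.proj j).comp (T.comp (LinearMap.single F (fun _ => E) j))
  have hone : ∀ x : E, ∃ y : E, T (x • (1 : Fin k → E)) = y • (1 : Fin k → E) := by
    intro x
    apply hT
    · intro h0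
      have := congrFun h0 j
      simp at this
    · intro i
      exact ⟨1, by simp⟩
  have hsing : ∀ (x : E) (i : Fin k), ∃ y : E, T (Pi.single i x) = Pi.single i y := by
    intro x i
    obtain ⟨y, hy⟩ := hT (Pi.single i 1) (by simp) (by
      intro l
      by_cases h : l = i
      · subst h
        exact ⟨1, by simp⟩
      · exact ⟨0, by simp [h]⟩) x
    refine ⟨y, ?_⟩
    simpa [← Pi.single_smul] using hy
  choose t ht using hsing
  have hdec : ∀ u : Fin k → E, T u = fun i => t (u i) i := by
    intro u
    conv_lhs => rw [← Finset.univ_sum_single u]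
    rw [map_sum]
    simp_rw [ht]
    exact Finset.univ_sum_single (fun i => t (u i) i)
  have hts : ∀ x i, t x i = s x := by
    intro x i
    obtain ⟨y, hy⟩ := hone x
    rw [hdec] at hy
    have h1 := congrFun hy i
    have h2 := congrFun hy j
    have h3 : s x = t x j := by
      simp [s, ht]
    simp at h1 h2
    rw [h3, h1, h2]
  have hs : ∀ u i, T u i = s (u i) := by
    intro u i
    rw [hdec]
    exact hts _ _
  have hvv : ∀ z i, s (z * (v i / v j)) = s z * (v i / v j) := by
    intro z i
    obtain ⟨y, hy⟩ := hTv (z / v j)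
    have h1 := congrFun hy i
    have h2 := congrFun hy j
    rw [hs] at h1 h2
    simp only [Pi.smul_apply, smul_eq_mul] at h1 h2
    rw [div_mul_cancel₀ _ hj] at h2
    rw [h2, show z * (v i / v j) = z / v j * v i by ring, h1]
    field_simp
  have hall : ∀ a : E, ∀ z, s (z * a) = s z * a := by
    intro a
    have ha : a ∈ IntermediateField.adjoin F (Set.range fun i => v i / v j) := by
      rw [hK]; trivial
    induction ha using IntermediateField.adjoin_induction with
    | mem x hx =>
      obtain ⟨i, rfl⟩ := hx
      exact fun z => hvv z i
    | algebraMap c =>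
      intro z
      rw [mul_comm, ← Algebra.smul_def, map_smul, Algebra.smul_def, mul_comm]
    | add x y _ _ hx hy =>
      intro z
      rw [mul_add, map_add, hx, hy, mul_add]
    | inv x _ hx =>
      intro z
      by_cases h0 : x = 0
      · simp [h0]
      · have := hx (z * x⁻¹)
        rw [inv_mul_cancel_right₀ h0] at this
        rw [this, mul_inv_cancel_right₀ h0]
    | mul x y _ _ hx hy =>
      intro z
      rw [← mul_assoc, hy, hx, mul_assoc]
  refine ⟨s 1, fun u => ?_⟩
  ext i
  rw [hs, ← one_mul (u i), hall]
  simp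

theorem aux_inv {F E V : Type} [Field F] [Field E] [Algebra F E] [AddCommGroup V] [Module F V]
    (φ : E →ₐ[F] Module.End F V) (W : Submodule F V)
    (hW : ∃ v : V, v ≠ 0 ∧ (W : Set V) = Set.range fun α : E => φ α v) (α : E) (x : V)
    (hx : x ∈ W) : φ α x ∈ W := by
  obtain ⟨u, -, hu⟩ := hW
  have hx' : x ∈ (W : Set V) := hx
  rw [hu] at hx'
  obtain ⟨β, rfl⟩ := hx'
  have : φ α (φ β u) ∈ (W : Set V) := by
    rw [hu]
    exact ⟨α * β, by simp⟩
  exact this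

/-- The `E`-line through `w` as an `F`-subspace. -/
noncomputable def auxLine (F : Type) {E : Type} [Field F] [Field E] [Algebra F E] {k : ℕ}
    (w : Fin k → E) : Submodule F (Fin k → E) :=
  LinearMap.range ((LinearMap.toSpanSingleton E (Fin k → E) w).restrictScalars F)

theorem auxLine_coe (F : Type) {E : Type} [Field F] [Field E] [Algebra F E] {k : ℕ}
    (w : Fin k → E) : (auxLine F w : Set (Fin k → E)) = Set.range fun α : E => α • w := by
  ext x
  simp [auxLine]

theorem aux_unique_s12 {F E : Type} [Field F] [Field E] [Finite E] [Algebra F E] {k : ℕ} (q : ℕ)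
    (hqF : ∀ c : F, c ^ q = c)
    (v : Fin k → E) (j : Fin k) (hj : v j ≠ 0)
    (hK : IntermediateField.adjoin F (Set.range fun i => v i / v j) = ⊤)
    (Ξ : Submodule F (Fin k → E))
    (hΞ : (Ξ : Set (Fin k → E)) = Set.range fun α : E => α • v)
    (D' : Set (Submodule F (Fin k → E))) (hD : IsDesSpread E D') (h1 : Ξ ∈ D')
    (h2 : segreRegulus q F E k ⊆ D') : D' = fieldReductionSpread F E k := by
  obtain ⟨φ, rfl⟩ := hD
  have key : ∀ α, ∃ μ : E, ∀ u, φ α u = μ • u := by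
    intro α
    apply aux_scalar v j hj hK (φ α)
    · intro w hw hwF x
      have hm : auxLine F w ∈ segreRegulus q F E k := by
        refine ⟨w, hw, ?_, auxLine_coe F w⟩
        intro i
        obtain ⟨c, hc⟩ := hwF i
        rw [← hc, ← map_pow, hqF]
      have := aux_inv φ _ (h2 hm) α (x • w) (by
        rw [← SetLike.mem_coe, auxLine_coe]; exact ⟨x, rfl⟩)
      rw [← SetLike.mem_coe, auxLine_coe] at this
      obtain ⟨y, hy⟩ := this
      exact ⟨y, hy.symm⟩
    · intro x
      have := aux_inv φ _ h1 α (x • v) (by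
        rw [← SetLike.mem_coe, hΞ]; exact ⟨x, rfl⟩)
      rw [← SetLike.mem_coe, hΞ] at this
      obtain ⟨y, hy⟩ := this
      exact ⟨y, hy.symm⟩
  choose μ hμ using key
  haveI : Nonempty (Fin k) := ⟨j⟩
  have hinj : Function.Injective μ := by
    intro a b hab
    apply φ.toRingHom.injective
    refine LinearMap.ext fun u => ?_
    change φ a u = φ b u
    rw [hμ, hμ, hab]
  have hsurj : Function.Surjective μ := Finite.surjective_of_injective hinj
  have hr : ∀ u, (Set.range fun α : E => φ α u) = Set.range fun α : E => α • u := by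
    intro u
    simp_rw [hμ]
    exact hsurj.range_comp (fun a : E => a • u)
  unfold fieldReductionSpread
  simp_rw [hr]

/-- Coordinatewise action conjugated by a linear equivalence. -/
noncomputable def auxPhi {F E : Type} [Field F] [Field E] [Algebra F E] (k : ℕ)
    (g : E ≃ₗ[F] E) : E →ₐ[F] Module.End F (Fin k → E) :=
  AlgHom.ofLinearMap
    { toFun := fun α =>
        { toFun := fun u i => g (α * g.symm (u i))
          map_add' := fun x y => by ext i; simp [mul_add]
          map_smul' := fun c x => by ext i; simp }
      map_add' := fun x y => by
        refine LinearMap.ext fun u => ?_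
        ext i; simp [add_mul]
      map_smul' := fun c x => by
        refine LinearMap.ext fun u => ?_
        ext i; simp }
    (by
      refine LinearMap.ext fun u => ?_
      ext i; simp)
    (fun x y => by
      refine LinearMap.ext fun u => ?_
      ext i; simp [mul_assoc])

theorem auxPhi_apply {F E : Type} [Field F] [Field E] [Algebra F E] (k : ℕ)
    (g : E ≃ₗ[F] E) (α : E) (u : Fin k → E) (i : Fin k) :
    auxPhi k g α u i = g (α * g.symm (u i)) := rfl

theorem aux_functional {F E : Type} [Field F] [Field E] [Algebra F E]
    (K : IntermediateField F E) (hK : K ≠ ⊤) :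
    ∃ f : E →ₗ[K] K, f 1 = 0 ∧ ∃ x, f x ≠ 0 := by
  have hex : ∃ θ : E, θ ∉ K := by
    by_contra hcon
    push Not at hcon
    exact hK (eq_top_iff.2 fun x _ => hcon x)
  obtain ⟨θ, hθ⟩ := hex
  have hn : θ ∉ Submodule.span K ({1} : Set E) := by
    intro hm
    obtain ⟨a, ha⟩ := Submodule.mem_span_singleton.1 hm
    apply hθ
    rw [← ha, Algebra.smul_def, mul_one]
    exact a.2
  obtain ⟨f, hf, hle⟩ := Submodule.exists_le_ker_of_notMem hn
  exact ⟨f, hle (Submodule.mem_span_singleton_self 1), θ, hf⟩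

theorem aux_exists_g {F E : Type} [Field F] [Field E] [Algebra F E]
    (K : IntermediateField F E) (hK : K ≠ ⊤) (c : K) (hc0 : c ≠ 0) (hc1 : c ≠ 1) :
    ∃ g : E ≃ₗ[K] E, g 1 = 1 ∧ ∃ x y, g (x * y) ≠ g x * g y := by
  obtain ⟨f, hf1, x, hx⟩ := aux_functional K hK
  have hfK : ∀ a : K, f (a : E) = 0 := by
    intro a
    have : (a : E) = a • (1 : E) := by rw [Algebra.smul_def, mul_one]; rfl
    rw [this, map_smul, hf1, smul_zero]
  have hg : ∀ d : K, ∃ g : E ≃ₗ[K] E, ∀ z, g z = z + (d * f z : K) := by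
    intro d
    have hlin : ∀ d : K, ∃ l : E →ₗ[K] E, ∀ z, l z = z + (d * f z : K) := by
      intro d
      refine ⟨LinearMap.id + (Algebra.linearMap K E).comp (d • f), fun z => ?_⟩
      simp [IntermediateField.algebraMap_apply]
    obtain ⟨l, hl⟩ := hlin d
    obtain ⟨m, hm⟩ := hlin (-d)
    refine ⟨LinearEquiv.ofLinearMap l m ?_ ?_, fun z => hl z⟩
    · refine LinearMap.ext fun z => ?_
      simp only [LinearMap.comp_apply, hl, hm, map_add, hfK, LinearMap.id_apply]
      push_cast; ring
    · refine LinearMap.ext fun z => ?_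
      simp only [LinearMap.comp_apply, hl, hm, map_add, hfK, LinearMap.id_apply]
      push_cast; ring
  by_contra hcon
  push Not at hcon
  have hmul : ∀ d : K, d ≠ 0 → (f (x * x) : E) = 2 * f x * x + d * f x ^ 2 := by
    intro d hd
    obtain ⟨g, hgz⟩ := hg d
    have := hcon g (by rw [hgz, hf1]; simp) x x
    rw [hgz, hgz] at this
    push_cast at this
    have hd' : (d : E) ≠ 0 := by simpa using hd
    apply mul_left_cancel₀ hd'
    linear_combination this
  have h1 := hmul 1 one_ne_zero
  have h2 := hmul c hc0
  have hx' : (f x : E) ≠ 0 := by simpa using hx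
  have h3 : ((c : E) - 1) * (f x : E) ^ 2 = 0 := by
    push_cast at h1
    linear_combination h1 - h2
  rcases mul_eq_zero.1 h3 with h | h
  · apply hc1
    ext
    simpa using sub_eq_zero.1 h
  · exact hx' (pow_eq_zero_iff (by norm_num) |>.1 h)

theorem aux_nonunique {F E : Type} [Field F] [Field E] [Algebra F E] {k : ℕ} (q : ℕ)
    (hk : 2 ≤ k) (hqF : ∀ x : E, x ^ q = x → ∃ c : F, algebraMap F E c = x)
    (v : Fin k → E) (j : Fin k) (hj : v j ≠ 0)
    (K : IntermediateField F E) (hvK : ∀ i, v i / v j ∈ K) (hK : K ≠ ⊤)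
    (c : K) (hc0 : c ≠ 0) (hc1 : c ≠ 1)
    (Ξ : Submodule F (Fin k → E))
    (hΞ : (Ξ : Set (Fin k → E)) = Set.range fun α : E => α • v) :
    ∃ D' : Set (Submodule F (Fin k → E)), IsDesSpread E D' ∧ Ξ ∈ D' ∧
      segreRegulus q F E k ⊆ D' ∧ D' ≠ fieldReductionSpread F E k := by
  obtain ⟨g, hg1, x, y, hxy⟩ := aux_exists_g K hK c hc0 hc1
  have hs1 : g.symm 1 = 1 := by rw [LinearEquiv.symm_apply_eq, hg1]
  let φ := auxPhi k (g.restrictScalars F)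
  have hφ : ∀ α u i, φ α u i = g (α * g.symm (u i)) := fun α u i => rfl
  have hline : ∀ w : Fin k → E, (∀ i, w i ∈ K) →
      (Set.range fun α : E => φ α w) = Set.range fun α : E => α • w := by
    intro w hw
    have h1 : ∀ α, φ α w = g α • w := by
      intro α
      ext i
      have e1 : w i = (⟨w i, hw i⟩ : K) • (1 : E) := by
        rw [Algebra.smul_def, mul_one]; rfl
      have e2 : g.symm (w i) = w i := by
        conv_lhs => rw [e1]
        rw [map_smul, hs1, ← e1]
      have e3 : α * w i = (⟨w i, hw i⟩ : K) • α := by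
        rw [Algebra.smul_def, mul_comm]; rfl
      rw [hφ, e2, e3, map_smul, Algebra.smul_def, mul_comm]; rfl
    simp_rw [h1]
    exact g.surjective.range_comp (fun a : E => a • w)
  refine ⟨_, ⟨φ, rfl⟩, ?_, ?_, ?_⟩
  · refine ⟨fun i => v i / v j, ?_, ?_⟩
    · intro h0
      have := congrFun h0 j
      simp [hj] at this
    · rw [hline _ hvK, hΞ]
      ext z
      constructor
      · rintro ⟨a, rfl⟩
        refine ⟨a * v j, ?_⟩
        ext i
        simp only [Pi.smul_apply, smul_eq_mul]
        field_simp
      · rintro ⟨a, rfl⟩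
        refine ⟨a / v j, ?_⟩
        ext i
        simp only [Pi.smul_apply, smul_eq_mul]
        field_simp
  · rintro W ⟨w, hw, hwq, hW⟩
    refine ⟨w, hw, ?_⟩
    rw [hW, hline]
    intro i
    obtain ⟨c, hc⟩ := hqF _ (hwq i)
    rw [← hc]
    exact K.algebraMap_mem c
  · intro heq
    apply hxy
    let i0 : Fin k := ⟨0, by omega⟩
    let i1 : Fin k := ⟨1, by omega⟩
    have hne : i1 ≠ i0 := by simp [i0, i1]
    let u : Fin k → E := fun i => if i = i0 then 1 else g y
    have hu0 : u i0 = 1 := by simp [u]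
    have hu1 : u i1 = g y := by simp [u, hne]
    have hu : u ≠ 0 := by
      intro h0
      have := congrFun h0 i0
      rw [hu0] at this
      simp at this
    let W : Submodule F (Fin k → E) := LinearMap.range (φ.toLinearMap.flip u)
    have hW : (W : Set (Fin k → E)) = Set.range fun α : E => φ α u := by
      ext z
      simp [W]
    have hm : W ∈ fieldReductionSpread F E k := by
      rw [← heq]
      exact ⟨u, hu, hW⟩
    obtain ⟨u', -, hu'⟩ := hm
    rw [hW] at hu'
    have m1 : u ∈ Set.range fun α : E => φ α u := ⟨1, by simp⟩
    have m2 : φ x u ∈ Set.range fun α : E => φ α u := ⟨x, rfl⟩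
    rw [hu'] at m1 m2
    obtain ⟨a, ha⟩ := m1
    obtain ⟨b, hb⟩ := m2
    have a0 := congrFun ha i0
    have a1 := congrFun ha i1
    have b0 := congrFun hb i0
    have b1 := congrFun hb i1
    rw [hφ, hu0, hs1, mul_one] at b0
    rw [hφ, hu1, g.symm_apply_apply] at b1
    rw [hu0] at a0
    rw [hu1] at a1
    simp only [Pi.smul_apply, smul_eq_mul] at a0 a1 b0 b1
    rw [← b1, ← b0, ← a1]
    linear_combination (- b * u' i1) * a0

theorem aux_roots {E : Type} [Field E] (n : ℕ) (hn : 1 < n) (S : Finset E)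
    (hS : ∀ x ∈ S, x ^ n = x) : S.card ≤ n := by
  classical
  have hne := FiniteField.X_pow_card_sub_X_ne_zero E hn
  have hdeg := FiniteField.X_pow_card_sub_X_natDegree_eq E hn
  rw [← hdeg]
  apply Polynomial.card_le_degree_of_subset_roots
  intro x hx
  rw [Polynomial.mem_roots hne]
  simp [hS x hx]

theorem aux_divisor (q k h : ℕ) (hq : 2 ≤ q)
    (F : Type) [Field F] [Fintype F] (hF : Fintype.card F = q)
    (E : Type) [Field E] [Fintype E] [Algebra F E] (hE : Fintype.card E = q ^ h)
    (v : Fin k → E) (j : Fin k) (hj : v j ≠ 0) :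
    IntermediateField.adjoin F (Set.range fun i => v i / v j) = ⊤ ↔
    ¬ ∃ r : ℕ, r ∣ h ∧ r < h ∧
        ∃ β : E, β ≠ 0 ∧ ∀ i, (β * v i) ^ q ^ r = β * v i := by
  have hfin : Module.finrank F E = h := by
    have := Module.card_eq_pow_finrank (K := F) (V := E)
    rw [hE, hF] at this
    exact (Nat.pow_right_injective hq this).symm
  constructor
  · rintro hK ⟨r, hdvd, hr, β, hβ, hβv⟩
    have hall : ∀ x : E, x ^ q ^ r = x := by
      intro x
      have hx : x ∈ IntermediateField.adjoin F (Set.range fun i => v i / v j) := by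
        rw [hK]; trivial
      have hfr : ∀ x : E, (FiniteField.frobeniusAlgHom F E ^ r) x = x ^ q ^ r := by
        intro x
        rw [AlgHom.coe_pow, FiniteField.coe_frobeniusAlgHom, pow_iterate, hF]
      rw [← hfr]
      induction hx using IntermediateField.adjoin_induction with
      | mem x hx =>
        obtain ⟨i, rfl⟩ := hx
        have : v i / v j = (β * v i) / (β * v j) := by field_simp
        simp only [this]
        rw [map_div₀, hfr, hfr, hβv, hβv]
      | algebraMap c => simp
      | add x y _ _ hx hy => rw [map_add, hx, hy]
      | inv x _ hx => rw [map_inv₀, hx]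
      | mul x y _ _ hx hy => rw [map_mul, hx, hy]
    have hr0 : r ≠ 0 := by
      rintro rfl
      rw [zero_dvd_iff] at hdvd
      omega
    have h1 : 1 < q ^ r := Nat.one_lt_pow hr0 (by omega)
    have h2 := aux_roots (q ^ r) h1 (Finset.univ : Finset E) (fun x _ => hall x)
    rw [Finset.card_univ, hE] at h2
    exact absurd h2 (not_le.2 (Nat.pow_lt_pow_right (by omega) hr))
  · intro hno
    by_contra hK
    set K := IntermediateField.adjoin F (Set.range fun i => v i / v j) with hKdef
    apply hno
    refine ⟨Module.finrank F K, ?_, ?_, (v j)⁻¹, inv_ne_zero hj, ?_⟩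
    · rw [← hfin]
      exact ⟨_, (Module.finrank_mul_finrank F K E).symm⟩
    · rw [← hfin]
      refine lt_of_le_of_ne (Submodule.finrank_le (Subalgebra.toSubmodule K.toSubalgebra)) ?_
      intro he
      exact hK (IntermediateField.eq_of_le_of_finrank_eq le_top
        (he.trans IntermediateField.finrank_top'.symm))
    · intro i
      have hm : v i / v j ∈ K := IntermediateField.subset_adjoin _ _ ⟨i, rfl⟩
      haveI : Fintype K := Fintype.ofFinite K
      have hc := FiniteField.pow_card (⟨_, hm⟩ : K)
      rw [Module.card_eq_pow_finrank (K := F) (V := K), hF] at hc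
      have := congrArg (Subtype.val) hc
      rw [inv_mul_eq_div]
      simpa using this

/-- Let `Ξ = F_{q^h}·v` be a member of the field-reduction spread
`D_h` disjoint from the Segre variety with `(h-1)`-regulus `R_{h,q}`.  Then `D_h` is
the unique Desarguesian `(h-1)`-spread of `PG(F_{q^h}^k)` containing `Ξ` and every
member of `R_{h,q}` if and only if there are no proper divisor `r` of `h` and no
`β ≠ 0` such that every entry of `β • v` lies in the subfield
`F_{q^r} = {x | x ^ (q^r) = x}`. -/
theorem stmt12 (q k h : ℕ) (hq : IsPrimePow q) (hk : 2 ≤ k) (hh : 2 ≤ h)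
    (F : Type) [Field F] [Fintype F] (hF : Fintype.card F = q)
    (E : Type) [Field E] [Fintype E] [Algebra F E] (hE : Fintype.card E = q ^ h)
    (v : Fin k → E) (hv : v ≠ 0)
    (Ξ : Submodule F (Fin k → E))
    (hΞ : (Ξ : Set (Fin k → E)) = Set.range fun α : E => α • v)
    (hdisj : ∀ w : Fin k → E, w ≠ 0 → (∀ i, w i ^ q = w i) →
      (Ξ : Set (Fin k → E)) ∩ (Set.range fun α : E => α • w) = {0}) :
    (IsDesSpread E (fieldReductionSpread F E k) ∧
      Ξ ∈ fieldReductionSpread F E k ∧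
      segreRegulus q F E k ⊆ fieldReductionSpread F E k ∧
      ∀ D' : Set (Submodule F (Fin k → E)), IsDesSpread E D' → Ξ ∈ D' →
        segreRegulus q F E k ⊆ D' → D' = fieldReductionSpread F E k) ↔
    ¬ ∃ r : ℕ, r ∣ h ∧ r < h ∧
        ∃ β : E, β ≠ 0 ∧ ∀ i, (β * v i) ^ q ^ r = β * v i := by
  have hq2 : 2 ≤ q := hq.two_le
  obtain ⟨j, hj⟩ : ∃ j, v j ≠ 0 := Function.ne_iff.1 hv
  have hqF : ∀ c : F, c ^ q = c := fun c => by rw [← hF]; exact FiniteField.pow_card c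
  have hqE : ∀ x : E, x ^ q = x → ∃ c : F, algebraMap F E c = x := by
    intro x hx
    classical
    by_contra hcon
    push Not at hcon
    have h2 := aux_roots q (by omega) (insert x (Finset.univ.image (algebraMap F E))) (by
      intro y hy
      rcases Finset.mem_insert.1 hy with rfl | hy
      · exact hx
      · obtain ⟨c, -, rfl⟩ := Finset.mem_image.1 hy
        rw [← map_pow, hqF])
    rw [Finset.card_insert_of_notMem (by simpa using hcon),
      Finset.card_image_of_injective _ (algebraMap F E).injective, Finset.card_univ, hF] at h2
    omega
  rw [← aux_divisor q k h hq2 F hF E hE v j hj]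
  set K := IntermediateField.adjoin F (Set.range fun i => v i / v j) with hKdef
  have hvK : ∀ i, v i / v j ∈ K := fun i => IntermediateField.subset_adjoin _ _ ⟨i, rfl⟩
  constructor
  · rintro ⟨-, -, -, huniq⟩
    by_contra hK
    have hc : ∃ c : K, c ≠ 0 ∧ c ≠ 1 := by
      by_contra hcon
      push Not at hcon
      have hw : ∀ i, v i / v j = 0 ∨ v i / v j = 1 := by
        intro i
        by_cases h0 : v i / v j = 0
        · exact Or.inl h0
        · right
          have := hcon ⟨_, hvK i⟩ (fun h => h0 (congrArg Subtype.val h))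
          exact congrArg Subtype.val this
      have hmem := hdisj (fun i => v i / v j) (by
        intro h0
        have := congrFun h0 j
        simp [hj] at this) (by
        intro i
        rcases hw i with h | h
        · simp only [h]; exact zero_pow (by omega)
        · simp only [h]; exact one_pow _)
      have hv0 : v ∈ ({0} : Set (Fin k → E)) := by
        rw [← hmem, hΞ]
        refine ⟨⟨1, one_smul _ _⟩, ⟨v j, ?_⟩⟩
        ext i
        simp only [Pi.smul_apply, smul_eq_mul]
        field_simp
      exact hv hv0
    obtain ⟨c, hc0, hc1⟩ := hc
    obtain ⟨D', h1, h2, h3, h4⟩ := aux_nonunique q hk hqE v j hj K hvK hK c hc0 hc1 Ξ hΞ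
    exact h4 (huniq D' h1 h2 h3)
  · intro hK
    refine ⟨⟨Algebra.lsmul F F (Fin k → E), rfl⟩, ⟨v, hv, hΞ⟩, ?_, ?_⟩
    · rintro W ⟨w, hw, -, hW⟩
      exact ⟨w, hw, hW⟩
    · intro D' h1 h2 h3
      exact aux_unique_s12 q hqF v j hj hK Ξ hΞ D' h1 h2 h3
end

section
/- Let q be a prime power, k, h ≥ 1, and let r be a proper divisor of h. In V = F_{q^h}^k regarded as an F_q-vector space, for λ ∈ F_{q^h}^* let W_λ = { λv : v ∈ F_{q^r}^k }, a kr-dimensional F_q-subspace of V. Then: (i) W_λ = W_μ if and only if λμ^{-1} ∈ F_{q^r}^*; (ii) distinct subspaces W_λ, W_μ intersect trivially; (iii) there are exactly (q^h - 1)/(q^r - 1) distinct subspaces among the W_λ; and (iv) the union of the W_λ \ {0} equals the set of nonzero vectors lying in some F_{q^h}·v with v ∈ F_{q^r}^k \ {0}, i.e. the W_λ form a system of (q^h-1)/(q^r-1) mutually disjoint (kr-1)-dimensional projective subspaces partitioning the point set of the generalized Segre variety S^r_{kr-1,h-1}(q). -/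
/-- The subset `W_λ = λ · F_{q^r}^k` of `F_{q^h}^k`, where
`F_{q^r} = {x | x ^ (q^r) = x}`. -/
def Wlam (q r k : ℕ) {E : Type} [Field E] (lam : E) : Set (Fin k → E) :=
  {x | ∃ u : Fin k → E, (∀ i, u i ^ q ^ r = u i) ∧ x = lam • u}

theorem Wlam_sub_of (q r k : ℕ) {E : Type} [Field E] (lam mu : E) (hm : mu ≠ 0)
    (h : (lam * mu⁻¹) ^ q ^ r = lam * mu⁻¹) : Wlam q r k lam ⊆ Wlam q r k mu := by
  rintro x ⟨u, hu, rfl⟩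
  refine ⟨(lam * mu⁻¹) • u, fun i => ?_, ?_⟩
  · simp only [Pi.smul_apply, smul_eq_mul]
    rw [mul_pow, h, hu]
  · rw [smul_smul]
    congr 1
    field_simp

theorem Wlam_eq_of (q r k : ℕ) {E : Type} [Field E] (lam mu : E) (hl : lam ≠ 0) (hm : mu ≠ 0)
    (h : (lam * mu⁻¹) ^ q ^ r = lam * mu⁻¹) : Wlam q r k lam = Wlam q r k mu := by
  apply Set.Subset.antisymm (Wlam_sub_of q r k lam mu hm h)
  apply Wlam_sub_of q r k mu lam hl
  have : mu * lam⁻¹ = (lam * mu⁻¹)⁻¹ := by simp [mul_comm]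
  rw [this, inv_pow, h]

theorem Wlam_eq_iff (q r k : ℕ) (hk : 1 ≤ k) {E : Type} [Field E] (lam mu : E) (hl : lam ≠ 0)
    (hm : mu ≠ 0) :
    Wlam q r k lam = Wlam q r k mu ↔ (lam * mu⁻¹) ^ q ^ r = lam * mu⁻¹ := by
  refine ⟨fun h => ?_, Wlam_eq_of q r k lam mu hl hm⟩
  have h1 : lam • (1 : Fin k → E) ∈ Wlam q r k lam := ⟨1, fun i => by simp, rfl⟩
  rw [h] at h1
  obtain ⟨u, hu, e⟩ := h1
  have e0 := congrFun e ⟨0, hk⟩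
  simp only [Pi.smul_apply, Pi.one_apply, smul_eq_mul, mul_one] at e0
  have : lam * mu⁻¹ = u ⟨0, hk⟩ := by rw [e0]; field_simp
  rw [this, hu]

theorem Wlam_inter (q r k : ℕ) {E : Type} [Field E] (lam mu : E) (hl : lam ≠ 0) (hm : mu ≠ 0)
    (hqr : q ^ r ≠ 0)
    (hne : Wlam q r k lam ≠ Wlam q r k mu) : Wlam q r k lam ∩ Wlam q r k mu = {0} := by
  ext x
  simp only [Set.mem_inter_iff, Set.mem_singleton_iff]
  constructor
  · rintro ⟨⟨u, hu, rfl⟩, v, hv, e⟩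
    by_contra hx
    apply hne
    apply Wlam_eq_of q r k lam mu hl hm
    obtain ⟨i, hi⟩ := Function.ne_iff.mp hx
    have hui : u i ≠ 0 := by
      intro h0
      apply hi
      simp [h0]
    have ei := congrFun e i
    simp only [Pi.smul_apply, smul_eq_mul] at ei
    have : lam * mu⁻¹ = v i * (u i)⁻¹ := by
      field_simp
      rw [ei]
    rw [this, mul_pow, inv_pow, hu, hv]
  · rintro rfl
    exact ⟨⟨0, fun i => zero_pow hqr, by simp⟩, ⟨0, fun i => zero_pow hqr, by simp⟩⟩

theorem fix_iff {E : Type} [Field E] (n : ℕ) (hn : 0 < n) (x : Eˣ) :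
    (x : E) ^ n = x ↔ x ^ (n - 1) = 1 := by
  obtain ⟨m, rfl⟩ : ∃ m, n = m + 1 := ⟨n - 1, by omega⟩
  rw [Nat.add_sub_cancel, Units.ext_iff, Units.val_pow_eq_pow_val, Units.val_one, pow_succ]
  exact mul_eq_right₀ x.ne_zero

theorem ker_card {E : Type} [Field E] [Fintype E] (q h r : ℕ) (hr : r ∣ h)
    (hE : Fintype.card E = q ^ h) :
    Nat.card (powMonoidHom (q ^ r - 1) : Eˣ →* Eˣ).ker = q ^ r - 1 := by
  rw [IsCyclic.card_powMonoidHom_ker, Nat.card_units, Nat.card_eq_fintype_card, hE]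
  exact Nat.gcd_eq_right (Nat.pow_sub_one_dvd_pow_sub_one q hr)

theorem fix_ncard {E : Type} [Field E] [Fintype E] (q h r : ℕ) (hr : r ∣ h) (hqr : 0 < q ^ r)
    (hE : Fintype.card E = q ^ h) :
    {x : E | x ^ q ^ r = x}.ncard = q ^ r := by
  have : {x : E | x ^ q ^ r = x} = insert 0 ((fun x : Eˣ => (x : E)) ''
      ((powMonoidHom (q ^ r - 1) : Eˣ →* Eˣ).ker : Set Eˣ)) := by
    ext x
    simp only [Set.mem_setOf_eq, Set.mem_insert_iff, Set.mem_image, SetLike.mem_coe,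
      MonoidHom.mem_ker, powMonoidHom_apply]
    constructor
    · intro hx
      by_cases h0 : x = 0
      · exact Or.inl h0
      · exact Or.inr ⟨Units.mk0 x h0, (fix_iff _ hqr _).1 hx, rfl⟩
    · rintro (rfl | ⟨y, hy, rfl⟩)
      · exact zero_pow hqr.ne'
      · exact (fix_iff _ hqr _).2 hy
  rw [this, Set.ncard_insert_of_notMem, Set.ncard_image_of_injective _ Units.val_injective,
    ← Nat.card_coe_set_eq]
  · have := ker_card (E := E) q h r hr hE
    simp only [SetLike.coe_sort_coe]
    omega
  · rintro ⟨y, -, hy⟩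
    exact y.ne_zero hy

/-- The fixed field as an `F`-subspace. -/
def fixSub (F : Type) [Field F] [Fintype F] (E : Type) [Field E] [Algebra F E] (r : ℕ) :
    Submodule F E where
  carrier := {x | x ^ Fintype.card F ^ r = x}
  zero_mem' := by
    have : Fintype.card F ^ r ≠ 0 := (pow_pos Fintype.card_pos r).ne'
    simp
  add_mem' := by
    intro a b ha hb
    have key : ∀ x, (FiniteField.frobeniusAlgHom F E ^ r) x = x ^ Fintype.card F ^ r := by
      intro x
      simp [AlgHom.coe_pow, FiniteField.coe_frobeniusAlgHom, pow_iterate]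
    simp only [Set.mem_setOf_eq, ← key] at *
    rw [map_add, ha, hb]
  smul_mem' := by
    intro c a ha
    have key : ∀ x, (FiniteField.frobeniusAlgHom F E ^ r) x = x ^ Fintype.card F ^ r := by
      intro x
      simp [AlgHom.coe_pow, FiniteField.coe_frobeniusAlgHom, pow_iterate]
    simp only [Set.mem_setOf_eq, ← key] at *
    rw [map_smul, ha]

theorem fixSub_finrank (q h r : ℕ) (hr : r ∣ h)
    (F : Type) [Field F] [Fintype F] (hF : Fintype.card F = q)
    (E : Type) [Field E] [Fintype E] [Algebra F E] (hE : Fintype.card E = q ^ h) :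
    Module.finrank F (fixSub F E r) = r := by
  subst hF
  have h1 : Nat.card (fixSub F E r) = Fintype.card F ^ r :=
    fix_ncard (E := E) _ h r hr (pow_pos Fintype.card_pos r) hE
  rw [Module.natCard_eq_pow_finrank (K := F), Nat.card_eq_fintype_card] at h1
  exact Nat.pow_right_injective (Fintype.one_lt_card (α := F)) h1

/-- The parametrisation of `W_λ`. -/
def parW (F : Type) [Field F] [Fintype F] (E : Type) [Field E] [Algebra F E] (r k : ℕ) (lam : E) :
    (Fin k → fixSub F E r) →ₗ[F] (Fin k → E) where
  toFun u := fun i => lam * (u i : E)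
  map_add' u v := by
    ext i
    simp [mul_add]
  map_smul' c u := by
    ext i
    simp

theorem Wlam_sub (q k h r : ℕ) (hr : r ∣ h)
    (F : Type) [Field F] [Fintype F] (hF : Fintype.card F = q)
    (E : Type) [Field E] [Fintype E] [Algebra F E] (hE : Fintype.card E = q ^ h)
    (lam : E) (hl : lam ≠ 0) : ∃ W : Submodule F (Fin k → E),
      (W : Set (Fin k → E)) = Wlam q r k lam ∧ Module.finrank F W = k * r := by
  refine ⟨LinearMap.range (parW F E r k lam), ?_, ?_⟩
  · subst hF
    ext x
    constructor
    · rintro ⟨u, rfl⟩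
      exact ⟨fun i => u i, fun i => (u i).2, rfl⟩
    · rintro ⟨u, hu, rfl⟩
      exact ⟨fun i => ⟨u i, hu i⟩, rfl⟩
  · rw [LinearMap.finrank_range_of_inj]
    · rw [Module.finrank_pi_fintype]
      simp [fixSub_finrank q h r hr F hF E hE]
    · intro u v huv
      ext i
      exact mul_left_cancel₀ hl (congrFun huv i)

theorem Wlam_count (q k h r : ℕ) (hk : 1 ≤ k) (hr : r ∣ h) (hqr : 0 < q ^ r)
    (E : Type) [Field E] [Fintype E] (hE : Fintype.card E = q ^ h) :
    {T : Set (Fin k → E) | ∃ lam : E, lam ≠ 0 ∧ T = Wlam q r k lam}.ncard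
      * (q ^ r - 1) = q ^ h - 1 := by
  have hpow : ∀ a b : Eˣ, Wlam q r k (a : E) = Wlam q r k (b : E) ↔
      a ^ (q ^ r - 1) = b ^ (q ^ r - 1) := by
    intro a b
    rw [Wlam_eq_iff q r k hk _ _ a.ne_zero b.ne_zero]
    have := fix_iff (q ^ r) hqr (a * b⁻¹)
    rw [Units.val_mul, Units.val_inv_eq_inv_val] at this
    rw [this, mul_pow, inv_pow, mul_inv_eq_one]
  have hcard : {T : Set (Fin k → E) | ∃ lam : E, lam ≠ 0 ∧ T = Wlam q r k lam}.ncard =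
      Nat.card (powMonoidHom (q ^ r - 1) : Eˣ →* Eˣ).range := by
    symm
    rw [← SetLike.coe_sort_coe, Nat.card_coe_set_eq]
    refine Set.ncard_congr' (Equiv.ofBijective
      (fun y => ⟨Wlam q r k ((Classical.choose y.2 : Eˣ) : E), _, Units.ne_zero _, rfl⟩) ⟨?_, ?_⟩)
    · intro y z hyz
      have h1 := (hpow _ _).1 (congrArg Subtype.val hyz)
      have hy := Classical.choose_spec y.2
      have hz := Classical.choose_spec z.2
      exact Subtype.ext (hy.symm.trans (h1.trans hz))
    · rintro ⟨T, lam, hl, rfl⟩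
      refine ⟨⟨Units.mk0 lam hl ^ (q ^ r - 1), Units.mk0 lam hl, rfl⟩, ?_⟩
      apply Subtype.ext
      refine (hpow _ (Units.mk0 lam hl)).2 ?_
      exact Classical.choose_spec (p := fun x : Eˣ => powMonoidHom (q ^ r - 1) x =
        Units.mk0 lam hl ^ (q ^ r - 1)) _
  rw [hcard, ← Subgroup.index_ker]
  have h2 := (powMonoidHom (q ^ r - 1) : Eˣ →* Eˣ).ker.card_mul_index
  rw [ker_card q h r hr hE, Nat.card_units, Nat.card_eq_fintype_card, hE] at h2
  rw [mul_comm, h2]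

/-- Let `r` be a proper divisor of `h` and, for `λ ∈ F_{q^h}^*`, let
`W_λ = λ·F_{q^r}^k ⊆ V = F_{q^h}^k`.  Then: each `W_λ` is a `kr`-dimensional
`F_q`-subspace of `V`; `W_λ = W_μ` iff `λμ⁻¹ ∈ F_{q^r}^*`; distinct `W_λ, W_μ`
intersect trivially; there are exactly `(q^h - 1)/(q^r - 1)` distinct such subspaces;
and the union of the `W_λ \ {0}` is exactly the set of nonzero vectors lying in some
`F_{q^h}·u` with `u ∈ F_{q^r}^k \ {0}`, i.e. the `W_λ` form a system of mutually
disjoint `(kr-1)`-dimensional projective subspaces partitioning the point set of the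
generalized Segre variety `S^r_{kr-1,h-1}(q)`. -/
theorem stmt14 (q k h r : ℕ) (hq : IsPrimePow q) (hk : 1 ≤ k) (hh : 1 ≤ h)
    (hr : r ∣ h) (hrlt : r < h)
    (F : Type) [Field F] [Fintype F] (hF : Fintype.card F = q)
    (E : Type) [Field E] [Fintype E] [Algebra F E] (hE : Fintype.card E = q ^ h) :
    (∀ lam : E, lam ≠ 0 → ∃ W : Submodule F (Fin k → E),
      (W : Set (Fin k → E)) = Wlam q r k lam ∧ Module.finrank F W = k * r) ∧
    (∀ lam mu : E, lam ≠ 0 → mu ≠ 0 →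
      (Wlam q r k lam = Wlam q r k mu ↔ (lam * mu⁻¹) ^ q ^ r = lam * mu⁻¹)) ∧
    (∀ lam mu : E, lam ≠ 0 → mu ≠ 0 → Wlam q r k lam ≠ Wlam q r k mu →
      Wlam q r k lam ∩ Wlam q r k mu = {0}) ∧
    ({T : Set (Fin k → E) | ∃ lam : E, lam ≠ 0 ∧ T = Wlam q r k lam}.ncard
      * (q ^ r - 1) = q ^ h - 1) ∧
    ({x : Fin k → E | (∃ lam : E, lam ≠ 0 ∧ x ∈ Wlam q r k lam) ∧ x ≠ 0} =
      {x : Fin k → E | x ≠ 0 ∧ ∃ u : Fin k → E, u ≠ 0 ∧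
        (∀ i, u i ^ q ^ r = u i) ∧ ∃ α : E, x = α • u}) := by
  have hqr : 0 < q ^ r := pow_pos hq.pos r
  refine ⟨fun lam hl => Wlam_sub q k h r hr F hF E hE lam hl,
    fun lam mu hl hm => Wlam_eq_iff q r k hk lam mu hl hm,
    fun lam mu hl hm => Wlam_inter q r k lam mu hl hm hqr.ne',
    Wlam_count q k h r hk hr hqr E hE, ?_⟩
  ext x
  constructor
  · rintro ⟨⟨lam, hl, u, hu, rfl⟩, hx⟩
    refine ⟨hx, u, ?_, hu, lam, rfl⟩
    rintro rfl
    simp at hx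
  · rintro ⟨hx, u, h0, hu, a, rfl⟩
    refine ⟨⟨a, ?_, u, hu, rfl⟩, hx⟩
    rintro rfl
    simp at hx
end

section
/- Assume q > 2 is a prime power and h ≥ 1. If S is a set of at least three points of PG(1,q^h) such that for any three distinct points of S the unique q-order subline through them is entirely contained in S, then S is a q^r-order subline of PG(1,q^h) for some divisor r of h. -/
/-- `T` is a subline of order `m` of `PG(1, E)`: there are linearly independent
vectors `u, w` of `E^2` such that `T` consists exactly of the points
`[c u + d w]` with coordinates `c, d` in the subfield `{x : E | x ^ m = x}`,
not both zero. -/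
def IsSubline {E : Type} [Field E] (m : ℕ)
    (T : Set (Projectivization E (Fin 2 → E))) : Prop :=
  ∃ u w : Fin 2 → E, LinearIndependent E ![u, w] ∧
    T = {p | ∃ c d : E, c ^ m = c ∧ d ^ m = d ∧
      ∃ hx : c • u + d • w ≠ 0, p = Projectivization.mk E (c • u + d • w) hx}

theorem aff_sub {E : Type} [Field E] (G : Set E) (A : Set E) (t : E) (ht : t ∈ G) (ht0 : t ≠ 0)
    (ht1 : t ≠ 1) (hG : ∀ x ∈ G, x⁻¹ ∈ G) (hG1 : ∀ x ∈ G, 1 - x ∈ G)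
    (h0 : (0:E) ∈ A)
    (hA : ∀ a ∈ A, ∀ b ∈ A, a ≠ b → ∀ s ∈ G, a + s * (b - a) ∈ A) :
    (∀ a ∈ A, ∀ s ∈ G, s * a ∈ A) ∧ (∀ a ∈ A, ∀ b ∈ A, a + b ∈ A) := by
  have hA' : ∀ a ∈ A, ∀ b ∈ A, ∀ s ∈ G, a + s * (b - a) ∈ A := by
    intro a ha b hb s hs
    by_cases h : a = b
    · subst h; simpa using ha
    · exact hA a ha b hb h s hs
  have h1 : ∀ a ∈ A, ∀ s ∈ G, s * a ∈ A := by
    intro a ha s hs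
    simpa using hA' 0 h0 a ha s hs
  refine ⟨h1, ?_⟩
  intro a ha b hb
  have h2 : (1 - t) ≠ 0 := sub_ne_zero.2 (Ne.symm ht1)
  have := hA' _ (h1 a ha (1-t)⁻¹ (hG _ (hG1 _ ht))) _ (h1 b hb t⁻¹ (hG _ ht)) t ht
  convert this using 1
  field_simp
  ring

theorem alg_closed {E : Type} [Field E] [Finite E] (A B : Set E)
    (h1 : (1:E) ∈ A) (hA0 : (0:E) ∈ A) (hB0 : (0:E) ∈ B)
    (hAB : ∀ x, x ≠ 0 → (x ∈ A ↔ x⁻¹ ∈ B))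
    (hA : ∀ a ∈ A, ∀ b ∈ A, a + b ∈ A) (hB : ∀ a ∈ B, ∀ b ∈ B, a + b ∈ B)
    (hAn : ∀ a ∈ A, -a ∈ A)
    (hhalf : (2:E) ≠ 0 → ∀ a ∈ A, (2:E)⁻¹ * a ∈ A) :
    (∀ a ∈ A, a⁻¹ ∈ A) ∧ (∀ a ∈ A, ∀ b ∈ A, a * b ∈ A) := by
  have hBA : ∀ y, y ∈ B → y⁻¹ ∈ A := by
    intro y hy
    by_cases h : y = 0
    · subst h; simpa using hA0
    · exact (hAB y⁻¹ (inv_ne_zero h)).2 (by simpa using hy)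
  have hAB' : ∀ y, y ∈ A → y⁻¹ ∈ B := by
    intro y hy
    by_cases h : y = 0
    · subst h; simpa using hB0
    · exact (hAB y h).1 hy
  -- Hua
  have hua : ∀ a ∈ A, ∀ b ∈ B, a * b * a ∈ A := by
    intro a ha b hb
    by_cases ha0 : a = 0
    · subst ha0; simpa using hA0
    by_cases hb0 : b = 0
    · subst hb0; simpa using hA0
    by_cases hab : b⁻¹ - a = 0
    · have : b⁻¹ = a := sub_eq_zero.1 hab
      rw [← this] at ha ⊢
      simpa [hb0] using ha
    have k1 : b⁻¹ - a ∈ A := by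
      rw [sub_eq_add_neg]; exact hA _ (hBA b hb) _ (hAn a ha)
    have k2 := hBA _ (hB _ (hAB' a ha) _ (hAB' _ k1))
    have k3 := hA _ ha _ (hAn _ k2)
    convert k3 using 1
    have hab2 : 1 - a * b ≠ 0 := by
      intro h; apply hab; field_simp; linear_combination h
    have e1 : b⁻¹ - a = (1 - a * b) / b := by field_simp
    have e2 : a⁻¹ + (b⁻¹ - a)⁻¹ = 1 / (a * (1 - a * b)) := by
      rw [e1]; field_simp; ring
    rw [e2]; field_simp; ring
  have hinv : ∀ a ∈ A, a⁻¹ ∈ A := by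
    intro a ha
    simpa using hua 1 h1 _ (hAB' a ha)
  have hAinB : ∀ a ∈ A, a ∈ B := by
    intro a ha
    simpa using hAB' _ (hinv a ha)
  have hsq : ∀ a ∈ A, ∀ b ∈ A, a ^ 2 * b ∈ A := by
    intro a ha b hb
    have := hua a ha b (hAinB b hb)
    convert this using 1; ring
  refine ⟨hinv, ?_⟩
  intro a ha b hb
  by_cases h2 : (2:E) = 0
  · have hinj : Function.Injective (fun x : A => (⟨x.1 ^ 2, by simpa using hsq x.1 x.2 1 h1⟩ : A)) := by
      intro x y hxy
      have : x.1 ^ 2 = y.1 ^ 2 := by simpa using hxy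
      apply Subtype.ext
      have h3 : (x.1 - y.1) ^ 2 = 0 := by linear_combination this + (y.1^2 - x.1*y.1) * h2
      exact sub_eq_zero.1 (pow_eq_zero_iff (two_ne_zero) |>.1 h3)
    obtain ⟨c, hc⟩ := (Finite.injective_iff_surjective.1 hinj) ⟨a, ha⟩
    have : c.1 ^ 2 = a := congrArg Subtype.val hc
    rw [← this]
    exact hsq _ c.2 _ hb
  · have k := hhalf h2 _ (hA _ (hsq _ (hA _ ha _ hb) 1 h1) _ (hAn _ (hA _ (hsq a ha 1 h1) _ (hsq b hb 1 h1))))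
    convert k using 1
    field_simp; ring

theorem roots_eq {E K : Type} [Field E] [Field K] [Fintype K] [Algebra K E] (x : E) :
    x ^ Fintype.card K = x ↔ x ∈ Set.range (algebraMap K E) := by
  classical
  constructor
  · intro hx
    by_contra hn
    let f : Polynomial E := Polynomial.X ^ Fintype.card K - Polynomial.X
    have hf : f ≠ 0 := FiniteField.X_pow_card_sub_X_ne_zero E Fintype.one_lt_card
    have hd : f.natDegree = Fintype.card K :=
      FiniteField.X_pow_card_sub_X_natDegree_eq E Fintype.one_lt_card
    let s : Finset E := insert x (Finset.univ.image (algebraMap K E))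
    have hs : s.card = Fintype.card K + 1 := by
      rw [Finset.card_insert_of_notMem (by simpa using hn),
        Finset.card_image_of_injective _ (algebraMap K E).injective, Finset.card_univ]
    have hle : s ⊆ f.roots.toFinset := by
      intro y hy
      rw [Multiset.mem_toFinset, Polynomial.mem_roots hf]
      simp only [s, Finset.mem_insert, Finset.mem_image, Finset.mem_univ, true_and] at hy
      rcases hy with rfl | ⟨k, rfl⟩
      · simp [f, hx]
      · simp [f, ← map_pow, FiniteField.pow_card]
    have := Finset.card_le_card hle
    have h2 := f.roots.toFinset_card_le
    have h3 := f.card_roots'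
    omega
  · rintro ⟨k, rfl⟩
    rw [← map_pow, FiniteField.pow_card]

theorem exists_sub (q h : ℕ) (hq : IsPrimePow q) (hh : 1 ≤ h)
    (E : Type) [Field E] [Fintype E] (hcard : Fintype.card E = q ^ h) :
    ∃ (F : Type) (_ : Field F) (_ : Fintype F) (_ : Algebra F E), Fintype.card F = q := by
  obtain ⟨p, n, hp, hn, rfl⟩ := (isPrimePow_nat_iff _).1 hq
  have : Fact p.Prime := ⟨hp⟩
  obtain ⟨p', hc, m, hp', hm⟩ := FiniteField.card' E
  have hpp : p' = p := by
    rw [hcard, ← pow_mul] at hm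
    have h1 : p ∣ p' ^ (m:ℕ) := by
      rw [← hm]; exact dvd_pow_self _ (by positivity)
    exact ((Nat.prime_dvd_prime_iff_eq hp hp').1 (hp.dvd_of_dvd_pow h1)).symm
  subst hpp
  let : Algebra (ZMod p') E := ZMod.algebra E p'
  have : Finite (GaloisField p' n) := inferInstance
  let : Fintype (GaloisField p' n) := Fintype.ofFinite _
  have hfE : Module.finrank (ZMod p') E = n * h := by
    have := Module.card_eq_pow_finrank (K := ZMod p') (V := E)
    rw [hcard, ZMod.card, ← pow_mul] at this
    exact (Nat.pow_right_injective hp.two_le this).symm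
  have hfF : Module.finrank (ZMod p') (GaloisField p' n) = n := GaloisField.finrank p' (by omega)
  obtain ⟨f⟩ := FiniteField.nonempty_algHom_of_finrank_dvd (F := ZMod p') (K := GaloisField p' n) (L := E)
    (by rw [hfE, hfF]; exact dvd_mul_right _ _)
  refine ⟨GaloisField p' n, inferInstance, inferInstance, f.toRingHom.toAlgebra, ?_⟩
  rw [← Nat.card_eq_fintype_card, GaloisField.card p' n (by omega)]

/-- vector `v` represents a point of `S` -/
def InS {E : Type} [Field E] (S : Set (Projectivization E (Fin 2 → E))) (v : Fin 2 → E) : Prop :=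
  ∃ hv : v ≠ 0, Projectivization.mk E v hv ∈ S

theorem InS_smul {E : Type} [Field E] {S : Set (Projectivization E (Fin 2 → E))} {v : Fin 2 → E}
    {c : E} (hc : c ≠ 0) : InS S (c • v) ↔ InS S v := by
  have key : ∀ (hv : v ≠ 0) (hcv : c • v ≠ 0),
      Projectivization.mk E (c • v) hcv = Projectivization.mk E v hv := by
    intro hv hcv
    rw [Projectivization.mk_eq_mk_iff']
    exact ⟨c, rfl⟩
  constructor
  · rintro ⟨h1, h2⟩
    have hv : v ≠ 0 := by rintro rfl; simp at h1
    exact ⟨hv, by rwa [key hv h1] at h2⟩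
  · rintro ⟨h1, h2⟩
    exact ⟨smul_ne_zero hc h1, by rwa [key h1]⟩

theorem pair_ne {E : Type} [Field E] {u w : Fin 2 → E} (hl : LinearIndependent E ![u, w]) {c d : E}
    (h : c ≠ 0 ∨ d ≠ 0) : c • u + d • w ≠ 0 := by
  intro h0
  have := LinearIndependent.pair_iff.1 hl c d h0
  tauto

theorem pair_span {E : Type} [Field E] {u w : Fin 2 → E} (hl : LinearIndependent E ![u, w])
    (v : Fin 2 → E) : ∃ c d : E, v = c • u + d • w := by
  have h := hl.span_eq_top_of_card_eq_finrank (by simp)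
  have hv : v ∈ Submodule.span E (Set.range ![u, w]) := by rw [h]; trivial
  simp only [Matrix.range_cons, Matrix.range_empty, Set.union_empty, Set.singleton_union] at hv
  obtain ⟨c, d, h⟩ := Submodule.mem_span_pair.1 hv
  exact ⟨c, d, h.symm⟩

theorem InS_line {E : Type} [Field E] {q : ℕ} (hq : q ≠ 0)
    {S : Set (Projectivization E (Fin 2 → E))}
    (hclosed : ∀ p₁ p₂ p₃, p₁ ∈ S → p₂ ∈ S → p₃ ∈ S →
      p₁ ≠ p₂ → p₁ ≠ p₃ → p₂ ≠ p₃ →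
      ∀ T, IsSubline q T → p₁ ∈ T → p₂ ∈ T → p₃ ∈ T → T ⊆ S)
    {u w : Fin 2 → E} (hl : LinearIndependent E ![u, w])
    (h1 : InS S u) (h2 : InS S w) (h3 : InS S (u + w)) {t : E} (ht : t ^ q = t) :
    InS S (t • u + w) := by
  obtain ⟨u0, h1⟩ := h1
  obtain ⟨w0, h2⟩ := h2
  obtain ⟨uw0, h3⟩ := h3
  have hne : t • u + w ≠ 0 := by simpa using pair_ne hl (c := t) (d := 1) (by simp)
  refine ⟨hne, hclosed _ _ _ h1 h2 h3 ?_ ?_ ?_ _ ⟨u, w, hl, rfl⟩ ?_ ?_ ?_ ?_⟩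
  · rw [Ne, Projectivization.mk_eq_mk_iff']
    rintro ⟨a, ha⟩
    have := pair_ne hl (c := -1) (d := a) (by simp)
    apply this; rw [ha]; simp
  · rw [Ne, Projectivization.mk_eq_mk_iff']
    rintro ⟨a, ha⟩
    have := LinearIndependent.pair_iff.1 hl (a - 1) a (by
      rw [sub_smul, one_smul, sub_add_eq_add_sub, ← smul_add, ha, sub_self])
    obtain ⟨h, rfl⟩ := this
    simp at h
  · rw [Ne, Projectivization.mk_eq_mk_iff']
    rintro ⟨a, ha⟩
    have := LinearIndependent.pair_iff.1 hl a (a - 1) (by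
      rw [sub_smul, one_smul, add_sub_assoc', ← smul_add, ha, sub_self])
    obtain ⟨rfl, h⟩ := this
    simp at h
  · exact ⟨1, 0, by simp, by simp [hq], by simpa using u0, by simp⟩
  · exact ⟨0, 1, by simp [hq], by simp, by simpa using w0, by simp⟩
  · exact ⟨1, 1, by simp, by simp, by simpa using uw0, by simp⟩
  · exact ⟨t, 1, ht, by simp, by simpa using hne, by simp⟩

theorem InS_aff {E : Type} [Field E] {q : ℕ} (hq : q ≠ 0)
    {S : Set (Projectivization E (Fin 2 → E))}
    (hclosed : ∀ p₁ p₂ p₃, p₁ ∈ S → p₂ ∈ S → p₃ ∈ S →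
      p₁ ≠ p₂ → p₁ ≠ p₃ → p₂ ≠ p₃ →
      ∀ T, IsSubline q T → p₁ ∈ T → p₂ ∈ T → p₃ ∈ T → T ⊆ S)
    {u w : Fin 2 → E} (hl : LinearIndependent E ![u, w]) (h1 : InS S u) :
    ∀ a ∈ {x : E | InS S (x • u + w)}, ∀ b ∈ {x : E | InS S (x • u + w)}, a ≠ b →
      ∀ s ∈ {x : E | x ^ q = x}, a + s * (b - a) ∈ {x : E | InS S (x • u + w)} := by
  intro a ha b hb hab s hs
  simp only [Set.mem_ofPred_eq] at *
  have hba : b - a ≠ 0 := sub_ne_zero.2 (Ne.symm hab)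
  have hl' : LinearIndependent E ![(b - a) • u, a • u + w] := by
    rw [LinearIndependent.pair_iff]
    intro c d hcd
    have := LinearIndependent.pair_iff.1 hl (c * (b - a) + d * a) d (by
      rw [← hcd]; module)
    obtain ⟨h, rfl⟩ := this
    simpa [hba] using h
  have := InS_line hq hclosed hl' ((InS_smul hba).2 h1) ha (by
    convert hb using 1; module) hs
  convert this using 1
  module

theorem exists_frame_s16 {E : Type} [Field E] 
    (S : Set (Projectivization E (Fin 2 → E)))
    (hS : 3 ≤ S.ncard) : ∃ u w : Fin 2 → E, LinearIndependent E ![u, w] ∧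
      InS S u ∧ InS S w ∧ InS S (u + w) := by
  obtain ⟨p1, p2, p3, h1, h2, h3, h12, h13, h23⟩ := Set.two_lt_ncard_iff (Set.finite_of_ncard_pos (by omega)) |>.1 hS
  have hl : LinearIndependent E ![p1.rep, p2.rep] :=
    (Projectivization.linearIndependent_pair_iff_ne).2 h12
  obtain ⟨c, d, h⟩ := pair_span hl p3.rep
  have r1 : InS S p1.rep := ⟨p1.rep_nonzero, by simpa using h1⟩
  have r2 : InS S p2.rep := ⟨p2.rep_nonzero, by simpa using h2⟩
  have r3 : InS S p3.rep := ⟨p3.rep_nonzero, by simpa using h3⟩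
  have hc : c ≠ 0 := by
    rintro rfl
    apply h23
    rw [← p2.mk_rep, ← p3.mk_rep, eq_comm, Projectivization.mk_eq_mk_iff']
    exact ⟨d, by simp [h]⟩
  have hd : d ≠ 0 := by
    rintro rfl
    apply h13
    rw [← p1.mk_rep, ← p3.mk_rep, eq_comm, Projectivization.mk_eq_mk_iff']
    exact ⟨c, by simp [h]⟩
  refine ⟨c • p1.rep, d • p2.rep, ?_, (InS_smul hc).2 r1, (InS_smul hd).2 r2, h ▸ r3⟩
  rw [LinearIndependent.pair_iff] at hl ⊢
  intro s t hst
  have := hl (s * c) (t * d) (by rw [← hst]; module)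
  simpa [hc, hd] using this

/-- **Rottey–Van de Voorde.** Assume `q > 2`.  If `S` is a set of at
least three points of `PG(1, q^h)` such that for any three distinct points of `S` the
unique `q`-order subline through them is entirely contained in `S`, then `S` is a
`q^r`-order subline of `PG(1, q^h)` for some divisor `r` of `h`. -/
theorem stmt16 (q h : ℕ) (hq : IsPrimePow q) (hq2 : 2 < q) (hh : 1 ≤ h)
    (E : Type) [Field E] [Fintype E] (hcard : Fintype.card E = q ^ h)
    (S : Set (Projectivization E (Fin 2 → E)))
    (hS : 3 ≤ S.ncard)
    (hclosed : ∀ p₁ p₂ p₃, p₁ ∈ S → p₂ ∈ S → p₃ ∈ S →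
      p₁ ≠ p₂ → p₁ ≠ p₃ → p₂ ≠ p₃ →
      ∀ T, IsSubline q T → p₁ ∈ T → p₂ ∈ T → p₃ ∈ T → T ⊆ S) :
    ∃ r : ℕ, r ∣ h ∧ IsSubline (q ^ r) S := by
  classical
  have hq0 : q ≠ 0 := by omega
  obtain ⟨F, _, _, _, hF⟩ := exists_sub q h hq hh E hcard
  obtain ⟨u, w, hl, hu, hw, huw⟩ := exists_frame_s16 S hS
  have hl' : LinearIndependent E ![w, u] := by
    rw [LinearIndependent.pair_iff] at hl ⊢
    intro s t hst
    exact (hl t s (by rw [← hst, add_comm])).symm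
  let G : Set E := {x : E | x ^ q = x}
  have hG : ∀ x, x ∈ G ↔ x ∈ Set.range (algebraMap F E) := by
    intro x; rw [← roots_eq, hF]; rfl
  let A : Set E := {x : E | InS S (x • u + w)}
  let B : Set E := {x : E | InS S (x • w + u)}
  have hA0 : (0:E) ∈ A := by simpa [A] using hw
  have hB0 : (0:E) ∈ B := by simpa [B] using hu
  have hA1 : (1:E) ∈ A := by simpa [A] using huw
  obtain ⟨t, ht0, ht1⟩ : ∃ t : F, t ≠ 0 ∧ t ≠ 1 := by
    have h3 : 2 < (Finset.univ : Finset F).card := by rw [Finset.card_univ, hF]; exact hq2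
    obtain ⟨t, ht⟩ := Finset.exists_mem_notMem_of_card_lt_card
      (lt_of_le_of_lt (Finset.card_le_two (a := (0:F)) (b := 1)) h3)
    refine ⟨t, ?_⟩
    simpa using ht
  have hGinv : ∀ x ∈ G, x⁻¹ ∈ G := by
    intro x hx
    rw [hG] at hx ⊢
    obtain ⟨y, rfl⟩ := hx
    exact ⟨y⁻¹, by simp⟩
  have hG1 : ∀ x ∈ G, 1 - x ∈ G := by
    intro x hx
    rw [hG] at hx ⊢
    obtain ⟨y, rfl⟩ := hx
    exact ⟨1 - y, by simp⟩
  have htG : algebraMap F E t ∈ G := (hG _).2 ⟨t, rfl⟩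
  have ht0' : algebraMap F E t ≠ 0 := by simpa using ht0
  have ht1' : algebraMap F E t ≠ 1 := by
    intro h; apply ht1; apply (algebraMap F E).injective; simpa using h
  obtain ⟨hAs, hAa⟩ := aff_sub G A _ htG ht0' ht1' hGinv hG1 hA0 (InS_aff hq0 hclosed hl hu)
  obtain ⟨hBs, hBa⟩ := aff_sub G B _ htG ht0' ht1' hGinv hG1 hB0 (InS_aff hq0 hclosed hl' hw)
  have hAB : ∀ x, x ≠ 0 → (x ∈ A ↔ x⁻¹ ∈ B) := by
    intro x hx
    change InS S _ ↔ InS S _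
    rw [← InS_smul hx (v := x⁻¹ • w + u), smul_add, smul_smul, mul_inv_cancel₀ hx, one_smul, add_comm]
  have hAn : ∀ a ∈ A, -a ∈ A := by
    intro a ha
    simpa using hAs a ha (-1) ((hG _).2 ⟨-1, by simp⟩)
  obtain ⟨hinv, hmul⟩ := alg_closed A B hA1 hA0 hB0 hAB hAa hBa hAn
    (fun _ a ha => hAs a ha _ ((hG _).2 ⟨2⁻¹, by rw [map_inv₀, map_ofNat]⟩))
  let K : IntermediateField F E :=
    { carrier := A
      mul_mem' := fun {a b} ha hb => hmul a ha b hb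
      one_mem' := hA1
      add_mem' := fun {a b} ha hb => hAa a ha b hb
      zero_mem' := hA0
      algebraMap_mem' := fun r => by
        simpa using hAs 1 hA1 (algebraMap F E r) ((hG _).2 ⟨r, rfl⟩)
      inv_mem' := fun a ha => hinv a ha }
  have hKA : ∀ x, x ∈ K ↔ InS S (x • u + w) := fun x => Iff.rfl
  have hcK : Fintype.card K = q ^ Module.finrank F K := by
    rw [← hF]; exact Module.card_eq_pow_finrank
  have hfE : Module.finrank F E = h := by
    have := Module.card_eq_pow_finrank (K := F) (V := E)
    rw [hcard, hF] at this
    exact (Nat.pow_right_injective (by omega) this).symm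
  have hKp : ∀ x : E, x ^ (q ^ Module.finrank F K) = x ↔ x ∈ K := by
    intro x
    rw [← hcK, roots_eq (K := K)]
    constructor
    · rintro ⟨y, rfl⟩; exact y.2
    · intro hx; exact ⟨⟨x, hx⟩, rfl⟩
  refine ⟨Module.finrank F K, ?_, u, w, hl, ?_⟩
  · rw [← hfE, ← Module.finrank_mul_finrank F K E]
    exact dvd_mul_right _ _
  ext p
  simp only [Set.mem_ofPred_eq, hKp]
  constructor
  · intro hp
    have hr : InS S p.rep := ⟨p.rep_nonzero, by simpa using hp⟩
    obtain ⟨c, d, hcd⟩ := pair_span hl p.rep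
    by_cases hd : d = 0
    · subst hd
      refine ⟨1, 0, K.one_mem, K.zero_mem, pair_ne hl (by simp), ?_⟩
      conv_lhs => rw [← p.mk_rep]
      rw [Projectivization.mk_eq_mk_iff']
      exact ⟨c, by rw [hcd]; simp⟩
    · have e : p.rep = d • ((c / d) • u + (1:E) • w) := by
        rw [hcd, smul_add, smul_smul, smul_smul, mul_div_cancel₀ _ hd, mul_one]
      refine ⟨c / d, 1, ?_, K.one_mem, pair_ne hl (by simp), ?_⟩
      · rw [hKA]
        rw [e, InS_smul hd, one_smul] at hr
        exact hr
      · conv_lhs => rw [← p.mk_rep]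
        rw [Projectivization.mk_eq_mk_iff']
        exact ⟨d, e.symm⟩
  · rintro ⟨c, d, hc, hd, hx, rfl⟩
    suffices InS S (c • u + d • w) from this.2
    by_cases hd0 : d = 0
    · subst hd0
      have hc0 : c ≠ 0 := by rintro rfl; simp at hx
      simpa using (InS_smul hc0).2 hu
    · have e : c • u + d • w = d • ((c / d) • u + w) := by
        rw [smul_add, smul_smul, mul_div_cancel₀ _ hd0]
      rw [e, InS_smul hd0, ← hKA]
      exact K.div_mem hc hd
end
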